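/- arXiv:1607.08137 — 6 statements merged into one kernel-verified Lean document; each statement's English description precedes it below -/
import Mathlib

section
/- Let r ≥ 1 and D ≥ 0 be integers and Q_0, …, Q_D ∈ ℚ[x] polynomials. Suppose the formal power series f = Σ_{d≥0} c_d q^d ∈ ℚ[[q]] satisfies (Σ_{j=0}^{D} q^j Q_j(θ)) f = 0. Then the formal power series g = Σ_{d≥0} (d!)^r c_d q^d satisfies (Σ_{j=0}^{D} q^j Q_j(θ) ∏_{m=1}^{j} (θ+m)^r) g = 0. Equivalently, at the level of coefficients: if Σ_{j=0}^{D} Q_j(d−j) c_{d−j} = 0 for all d ≥ 0 (with c_e = 0 for e < 0), then Σ_{j=0}^{D} Q_j(d−j) · (∏_{m=1}^{j}(d−j+m))^r · ((d−j)!)^r c_{d−j} = 0 for all d ≥ 0. -/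
/-! For `j ≤ d` one has `∏_{m=1}^{j} (d-j+m) · (d-j)! = d!`, which is independent of `j`, so the
modified recursion at `d` is `(d!)^r` times the original one. The terms with `d < j` vanish in
both, since there `c_{d-j} = 0`. -/

open scoped Nat

theorem prod_Icc_add_eq_ascFactorial (n j : ℕ) :
    ∏ m ∈ Finset.Icc 1 j, (n + m) = (n + 1).ascFactorial j := by
  induction j with
  | zero => simp
  | succ j ih =>
    rw [Finset.prod_Icc_succ_top (Nat.le_add_left 1 j), ih, Nat.ascFactorial_succ, mul_comm,
      add_assoc, add_comm 1 j]

section CommRing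

variable {R : Type*} [CommRing R]

theorem prod_Icc_sub_add_mul_factorial_toNat {d : ℤ} {j : ℕ} (hjd : (j : ℤ) ≤ d) :
    (∏ m ∈ Finset.Icc 1 j, ((d : R) - (j : R) + (m : R))) * ((d - (j : ℤ)).toNat ! : R) =
      (d.toNat ! : R) := by
  obtain ⟨n, rfl⟩ : ∃ n : ℕ, d = n + j := ⟨(d - j).toNat, by omega⟩
  have prod_mul_factorial : (∏ m ∈ Finset.Icc 1 j, (n + m)) * n ! = (n + j)! := by
    rw [prod_Icc_add_eq_ascFactorial, mul_comm, Nat.factorial_mul_ascFactorial]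
  have toNat_add : ((n : ℤ) + j).toNat = n + j := by omega
  rw [toNat_add, ← prod_mul_factorial]
  simp

theorem sum_mul_prod_pow_mul_factorial_pow (r : ℕ) (s : Finset ℕ) (a : ℕ → R) (c : ℤ → R)
    (hc : ∀ e : ℤ, e < 0 → c e = 0) (d : ℤ) :
    ∑ j ∈ s, a j * (∏ m ∈ Finset.Icc 1 j, ((d : R) - (j : R) + (m : R))) ^ r *
        ((d - (j : ℤ)).toNat ! : R) ^ r * c (d - j) =
      (d.toNat ! : R) ^ r * ∑ j ∈ s, a j * c (d - j) := by
  rw [Finset.mul_sum]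
  refine Finset.sum_congr rfl fun j _ => ?_
  rcases lt_or_ge d j with hdj | hjd
  · rw [hc _ (sub_neg.mpr hdj), mul_zero, mul_zero, mul_zero]
  · rw [← prod_Icc_sub_add_mul_factorial_toNat hjd]
    ring

theorem stmt_0_general (r D : ℕ) (Q : ℕ → Polynomial R) (c : ℤ → R)
    (hc : ∀ e : ℤ, e < 0 → c e = 0)
    (h : ∀ d : ℤ, 0 ≤ d →
      ∑ j ∈ Finset.range (D + 1), (Q j).eval ((d : R) - (j : R)) * c (d - j) = 0) :
    ∀ d : ℤ, 0 ≤ d →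
      ∑ j ∈ Finset.range (D + 1),
        (Q j).eval ((d : R) - (j : R)) *
          (∏ m ∈ Finset.Icc 1 j, ((d : R) - (j : R) + (m : R))) ^ r *
          ((d - (j : ℤ)).toNat ! : R) ^ r * c (d - j) = 0 := by
  intro d hd
  rw [sum_mul_prod_pow_mul_factorial_pow r _ _ c hc, h d hd, mul_zero]

end CommRing

/-- hypergeometric modification / quantum Lefschetz lemma of
Batyrev–van Straten, coefficient form.  If the coefficients `c` of a formal power
series `f = Σ c_d q^d` satisfy the recursion coming from the differential operator
`Σ_{j=0}^{D} q^j Q_j(θ)`, then the coefficients `(d!)^r c_d` of the modified series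
satisfy the recursion coming from `Σ_{j=0}^{D} q^j Q_j(θ) ∏_{m=1}^{j} (θ+m)^r`. -/
theorem stmt_0 (r D : ℕ) (hr : 1 ≤ r) (Q : ℕ → Polynomial ℚ) (c : ℤ → ℚ)
    (hc : ∀ e : ℤ, e < 0 → c e = 0)
    (h : ∀ d : ℤ, 0 ≤ d →
      ∑ j ∈ Finset.range (D + 1), (Q j).eval ((d : ℚ) - (j : ℚ)) * c (d - j) = 0) :
    ∀ d : ℤ, 0 ≤ d →
      ∑ j ∈ Finset.range (D + 1),
        (Q j).eval ((d : ℚ) - (j : ℚ)) *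
          (∏ m ∈ Finset.Icc 1 j, ((d : ℚ) - (j : ℚ) + (m : ℚ))) ^ r *
          (((d - (j : ℤ)).toNat.factorial : ℚ)) ^ r * c (d - j) = 0 :=
  stmt_0_general r D Q c hc h
end

section
/- Let M(q) be the 8×8 matrix over ℚ[q] whose rows (indexed 0,…,7) are: row 0 = (0, 4q, 0, 0, 72q², 40q², 0, 396q³); row 1 = (1, 0, 9q, 5q, 0, 0, 132q², 0); row 2 = (0, 1, 0, 0, 8q, 4q, 0, 0); row 3 = (0, 0, 0, 0, 6q, 4q, 0, 132q²); row 4 = (0, 0, 1, 0, 0, 0, 0, 0); row 5 = (0, 0, 0, 1, 0, 0, (33/2)q, 0); row 6 = (0, 0, 0, 0, 1, 6/11, 0, 4q); row 7 = (0, 0, 0, 0, 0, 0, 1, 0). Suppose s_0, …, s_7 ∈ ℚ[[q]] satisfy the system θ s_i = Σ_{j=0}^{7} M(q)_{ij} s_j for all i. Then (Σ_{i=0}^{6} q^i Q_i(θ)) s_7 = 0, where Q_0 = 242(θ−1)²θ⁶; Q_1 = −11θ²(1615θ⁶ − 4845θ⁵ + 4598θ⁴ + 1640θ³ + 1370θ²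 + 550θ + 88); Q_2 = 103968θ⁸ − 415872θ⁷ + 1108270θ⁶ + 662150θ⁵ + 2273θ⁴ − 230318θ³ − 24299θ² + 61468θ + 19360; Q_3 = −3950784θ⁶ + 4345395θ⁴ + 1309385θ³ − 2484702θ² − 1988272θ − 440880; Q_4 = 4(233928θ⁴ + 467856θ³ + 664544θ² + 587366θ + 156697); Q_5 = −1216(1368θ² + 2736θ − 479); Q_6 = −6653952. -/
noncomputable section
namespace Stmt1

open PowerSeries

/-- The Euler operator `θ = q·d/dq` on `ℚ[[q]]`. -/
def th (f : PowerSeries ℚ) : PowerSeries ℚ :=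
  PowerSeries.mk fun d => (d : ℚ) * PowerSeries.coeff d f

/-- The connection matrix `M(q)` of the `E′`-twisted quantum connection on `G(3,7)`,
`E′ = Λ²S* ⊕ Λ³Q`, in the basis `1, s₁, s₁², s₂, s₁³, s₁s₂, s₁⁴, s₁⁵`. -/
def M : Matrix (Fin 8) (Fin 8) (PowerSeries ℚ) :=
  !![0, 4 * X, 0, 0, 72 * X ^ 2, 40 * X ^ 2, 0, 396 * X ^ 3;
     1, 0, 9 * X, 5 * X, 0, 0, 132 * X ^ 2, 0;
     0, 1, 0, 0, 8 * X, 4 * X, 0, 0;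
     0, 0, 0, 0, 6 * X, 4 * X, 0, 132 * X ^ 2;
     0, 0, 1, 0, 0, 0, 0, 0;
     0, 0, 0, 1, 0, 0, C (33 / 2 : ℚ) * X, 0;
     0, 0, 0, 0, 1, C (6 / 11 : ℚ), 0, 4 * X;
     0, 0, 0, 0, 0, 0, 1, 0]

/-- `Q₀(θ) = 242(θ−1)²θ⁶` applied to a power series. -/
def Q0op (f : PowerSeries ℚ) : PowerSeries ℚ :=
  242 * ((fun g => th g - g) ((fun g => th g - g) (th^[6] f)))

/-- `Q₁(θ) = −11θ²(1615θ⁶ − 4845θ⁵ + 4598θ⁴ + 1640θ³ + 1370θ² + 550θ + 88)` applied. -/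
def Q1op (f : PowerSeries ℚ) : PowerSeries ℚ :=
  -11 * th (th (1615 * th^[6] f - 4845 * th^[5] f + 4598 * th^[4] f + 1640 * th^[3] f +
    1370 * th^[2] f + 550 * th f + 88 * f))

/-- `Q₂(θ)` applied. -/
def Q2op (f : PowerSeries ℚ) : PowerSeries ℚ :=
  103968 * th^[8] f - 415872 * th^[7] f + 1108270 * th^[6] f + 662150 * th^[5] f +
    2273 * th^[4] f - 230318 * th^[3] f - 24299 * th^[2] f + 61468 * th f + 19360 * f

/-- `Q₃(θ)` applied. -/
def Q3op (f : PowerSeries ℚ) : PowerSeries ℚ :=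
  -3950784 * th^[6] f + 4345395 * th^[4] f + 1309385 * th^[3] f - 2484702 * th^[2] f -
    1988272 * th f - 440880 * f

/-- `Q₄(θ)` applied. -/
def Q4op (f : PowerSeries ℚ) : PowerSeries ℚ :=
  4 * (233928 * th^[4] f + 467856 * th^[3] f + 664544 * th^[2] f + 587366 * th f + 156697 * f)

/-- `Q₅(θ)` applied. -/
def Q5op (f : PowerSeries ℚ) : PowerSeries ℚ :=
  -1216 * (1368 * th^[2] f + 2736 * th f - 479 * f)

/-- `Q₆(θ)` applied. -/
def Q6op (f : PowerSeries ℚ) : PowerSeries ℚ := -6653952 * f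

/-! The pairing `⟨v, s⟩ = ∑ vᵢ sᵢ` of a row vector `v` with a solution `s` of `θ s = M s` satisfies
`θ⟨v, s⟩ = ⟨∇v, s⟩`, where `∇v = θv + vM` is the dual connection, so a differential operator that
annihilates the basis vector `e₇` under `∇` annihilates `s₇ = ⟨e₇, s⟩`. Rescaling `s₅, s₆, s₇` by
`2, 11, 11` makes the connection matrix integral. The vectors `∇ⁿ e₇`, `n ≤ 8`, are then explicit
vectors over `ℤ[q]`, and `∑ qⁱ Qᵢ(∇) e₇ = 0` is a `ℤ[q]`-linear relation between them. -/

open Matrix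
open scoped Polynomial

theorem sum_univ_nine {N : Type*} [AddCommMonoid N] (f : Fin 9 → N) :
    ∑ n, f n = f 0 + f 1 + f 2 + f 3 + f 4 + f 5 + f 6 + f 7 + f 8 := by
  rw [Fin.sum_univ_castSucc, Fin.sum_univ_eight]
  rfl

section DualConnection

variable {R A ι : Type*} [CommRing R] [CommRing A] [Algebra R A] [Fintype ι]
  (D : Derivation R A A) (M : Matrix ι ι A)

/-- The connection `v ↦ D v + v M` on row vectors, dual to the connection whose flat sections are
the solutions `s` of `D s = M s`. -/
def dualConnection : Module.End R (ι → A) where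
  toFun v := D ∘ v + v ᵥ* M
  map_add' v w := by
    ext i
    simp only [add_vecMul, Pi.add_apply, Function.comp_apply, map_add]
    ring
  map_smul' c v := by
    ext i
    simp [smul_vecMul]

theorem dualConnection_apply (v : ι → A) (i : ι) :
    dualConnection D M v i = D (v i) + ∑ j, v j * M j i := rfl

theorem derivation_ofNat (n : ℕ) [n.AtLeastTwo] : D (ofNat(n) : A) = 0 :=
  D.map_natCast n

theorem derivation_dotProduct (v s : ι → A) :
    D (v ⬝ᵥ s) = (D ∘ v) ⬝ᵥ s + v ⬝ᵥ (D ∘ s) := by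
  simp only [dotProduct, map_sum, Derivation.leibniz, smul_eq_mul, Function.comp_apply,
    ← Finset.sum_add_distrib]
  exact Finset.sum_congr rfl fun i _ ↦ by ring

variable {D M} {s : ι → A}

theorem derivation_dotProduct_of_flat (hs : D ∘ s = M *ᵥ s) (v : ι → A) :
    D (v ⬝ᵥ s) = dualConnection D M v ⬝ᵥ s := by
  rw [derivation_dotProduct, hs, dotProduct_mulVec, ← add_dotProduct]
  rfl

theorem aeval_derivation_dotProduct_of_flat (hs : D ∘ s = M *ᵥ s) (p : R[X]) (v : ι → A) :
    Polynomial.aeval (D : Module.End R A) p (v ⬝ᵥ s) =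
      Polynomial.aeval (dualConnection D M) p v ⬝ᵥ s := by
  induction p using Polynomial.induction_on generalizing v with
  | C c => simp [Module.algebraMap_end_apply]
  | add p r hp hr => simp [hp, hr, add_dotProduct]
  | monomial n c ih =>
    simp only [pow_succ, ← mul_assoc, map_mul _ _ Polynomial.X, Polynomial.aeval_X,
      Module.End.mul_apply, Derivation.coeFn_coe, derivation_dotProduct_of_flat hs, ih]

theorem flat_smul_of_smul_eq {N : Matrix ι ι A} {d : ι → R} (hs : D ∘ s = M *ᵥ s)
    (hd : ∀ i j, d j • N i j = d i • M i j) : D ∘ (d • s) = N *ᵥ (d • s) := by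
  ext i
  have hsi : D (s i) = ∑ j, M i j * s j := congrFun hs i
  calc
    D (d i • s i) = ∑ j, d i • M i j * s j := by
      simp only [D.map_smul, hsi, Finset.smul_sum, smul_mul_assoc]
    _ = ∑ j, N i j * d j • s j := by simp only [← hd, smul_mul_assoc, mul_smul_comm]

end DualConnection

section QuantumPolynomial

local notation "θ" => (Polynomial.X : Polynomial _)

/-- The coefficients `Qᵢ(θ)` of the quantum differential operator `∑ qⁱ Qᵢ(θ)`, as polynomials in
the indeterminate `θ`. -/
def quantumPolynomial (R : Type*) [CommRing R] : Fin 7 → R[X] :=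
  ![242 * (θ - 1) ^ 2 * θ ^ 6,
    -11 * θ ^ 2 * (1615 * θ ^ 6 - 4845 * θ ^ 5 + 4598 * θ ^ 4 + 1640 * θ ^ 3 + 1370 * θ ^ 2 +
      550 * θ + 88),
    103968 * θ ^ 8 - 415872 * θ ^ 7 + 1108270 * θ ^ 6 + 662150 * θ ^ 5 + 2273 * θ ^ 4 -
      230318 * θ ^ 3 - 24299 * θ ^ 2 + 61468 * θ + 19360,
    -3950784 * θ ^ 6 + 4345395 * θ ^ 4 + 1309385 * θ ^ 3 - 2484702 * θ ^ 2 - 1988272 * θ - 440880,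
    4 * (233928 * θ ^ 4 + 467856 * θ ^ 3 + 664544 * θ ^ 2 + 587366 * θ + 156697),
    -1216 * (1368 * θ ^ 2 + 2736 * θ - 479),
    -6653952]

end QuantumPolynomial

section QuantumOperator

variable {R A V : Type*} [CommRing R] [CommRing A] [Algebra R A] [AddCommGroup V] [Module R V]
  [Module A V] [IsScalarTower R A V]

/-- The quantum differential operator `∑ qⁱ Qᵢ(D)`, for any operator `D` in the role of the Euler
operator `θ`; multiplication by `qⁱ` is applied after `Qᵢ(D)`. -/
def quantumOperator (q : A) (D : Module.End R V) : Module.End R V :=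
  ∑ i : Fin 7, Algebra.lsmul R R V (q ^ (i : ℕ)) * Polynomial.aeval D (quantumPolynomial R i)

theorem quantumOperator_apply (q : A) (D : Module.End R V) (v : V) :
    quantumOperator q D v =
      ∑ i : Fin 7, q ^ (i : ℕ) • Polynomial.aeval D (quantumPolynomial R i) v := by
  simp only [quantumOperator, LinearMap.sum_apply, Module.End.mul_apply, Algebra.lsmul_coe]

/-- The coefficient of `θⁿ` in `∑ qⁱ Qᵢ(θ)`, for `n ≤ 8`. -/
def quantumCoeff (q : A) : Fin 9 → A :=
  ![19360 * q ^ 2 - 440880 * q ^ 3 + 626788 * q ^ 4 + 582464 * q ^ 5 - 6653952 * q ^ 6,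
    61468 * q ^ 2 - 1988272 * q ^ 3 + 2349464 * q ^ 4 - 3326976 * q ^ 5,
    -968 * q - 24299 * q ^ 2 - 2484702 * q ^ 3 + 2658176 * q ^ 4 - 1663488 * q ^ 5,
    -6050 * q - 230318 * q ^ 2 + 1309385 * q ^ 3 + 1871424 * q ^ 4,
    -15070 * q + 2273 * q ^ 2 + 4345395 * q ^ 3 + 935712 * q ^ 4,
    -18040 * q + 662150 * q ^ 2,
    242 - 50578 * q + 1108270 * q ^ 2 - 3950784 * q ^ 3,
    -484 + 53295 * q - 415872 * q ^ 2,
    242 - 17765 * q + 103968 * q ^ 2]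

theorem quantumOperator_apply_eq_sum_pow (q : A) (D : Module.End R V) (v : V) :
    quantumOperator q D v = ∑ n : Fin 9, quantumCoeff q n • (D ^ (n : ℕ)) v := by
  rw [quantumOperator_apply, Fin.sum_univ_seven, sum_univ_nine]
  simp only [quantumPolynomial, quantumCoeff, cons_val, cons_val_zero, cons_val_one,
    Fin.coe_ofNat_eq_mod, Nat.reduceMod, map_add, map_sub, map_neg, map_mul, map_one, map_ofNat,
    map_nsmul, Polynomial.aeval_X, LinearMap.add_apply, LinearMap.sub_apply, LinearMap.neg_apply,
    Module.End.ofNat_apply, Module.End.one_apply, Module.End.mul_apply, pow_succ', pow_zero]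
  module

theorem quantumOperator_derivation_dotProduct {ι : Type*} [Fintype ι] {D : Derivation R A A}
    {M : Matrix ι ι A} {s : ι → A} (q : A) (hs : D ∘ s = M *ᵥ s) (v : ι → A) :
    quantumOperator q (D : Module.End R A) (v ⬝ᵥ s) =
      quantumOperator q (dualConnection D M) v ⬝ᵥ s := by
  simp only [quantumOperator_apply, aeval_derivation_dotProduct_of_flat hs, sum_dotProduct,
    smul_dotProduct]

end QuantumOperator

section IntegralConnection

variable {R A : Type*} [CommRing R] [CommRing A] [Algebra R A] {D : Derivation R A A} {q : A}

/-- The connection matrix of the system for `(s₀, …, s₄, 2 s₅, 11 s₆, 11 s₇)`. -/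
def integralConnectionMatrix (q : A) : Matrix (Fin 8) (Fin 8) A :=
  !![0, 4 * q, 0, 0, 72 * q ^ 2, 20 * q ^ 2, 0, 36 * q ^ 3;
     1, 0, 9 * q, 5 * q, 0, 0, 12 * q ^ 2, 0;
     0, 1, 0, 0, 8 * q, 2 * q, 0, 0;
     0, 0, 0, 0, 6 * q, 2 * q, 0, 12 * q ^ 2;
     0, 0, 1, 0, 0, 0, 0, 0;
     0, 0, 0, 2, 0, 0, 3 * q, 0;
     0, 0, 0, 0, 11, 3, 0, 4 * q;
     0, 0, 0, 0, 0, 0, 1, 0]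

/-- The vectors `∇ⁿ e₇`, `n ≤ 8`, for the connection `∇` dual to `integralConnectionMatrix q`. -/
def cyclicVectors (q : A) : Fin 9 → Fin 8 → A :=
  ![![0, 0, 0, 0, 0, 0, 0, 1],
    ![0, 0, 0, 0, 0, 0, 1, 0],
    ![0, 0, 0, 0, 11, 3, 0, 4 * q],
    ![0, 0, 11, 6, 0, 0, 13 * q, 4 * q],
    ![0, 11, 0, 0, 267 * q, 73 * q, 17 * q, 4 * q + 124 * q ^ 2],
    ![11, 0, 366 * q, 201 * q, 454 * q, 124 * q, 21 * q + 475 * q ^ 2, 4 * q + 316 * q ^ 2],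
    ![0, 410 * q, 820 * q, 449 * q, 685 * q + 10151 * q ^ 2, 187 * q + 2779 * q ^ 2,
      25 * q + 1638 * q ^ 2, 4 * q + 716 * q ^ 2 + 4708 * q ^ 3],
    ![410 * q, 1230 * q, 1505 * q + 13841 * q ^ 2, 823 * q + 7608 * q ^ 2,
      960 * q + 47574 * q ^ 2, 262 * q + 13010 * q ^ 2, 29 * q + 4553 * q ^ 2 + 17965 * q ^ 3,
      4 * q + 1532 * q ^ 2 + 26064 * q ^ 3],
    ![1640 * q, 2735 * q + 15481 * q ^ 2, 2465 * q + 86326 * q ^ 2, 1347 * q + 47386 * q ^ 2,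
      1279 * q + 162209 * q ^ 2 + 383511 * q ^ 3, 349 * q + 44335 * q ^ 2 + 104993 * q ^ 3,
      33 * q + 11424 * q ^ 2 + 133749 * q ^ 3,
      4 * q + 3180 * q ^ 2 + 106280 * q ^ 3 + 177916 * q ^ 4]]

theorem dualConnection_integralConnectionMatrix (v : Fin 8 → A) :
    dualConnection D (integralConnectionMatrix q) v =
      ![D (v 0) + v 1,
        D (v 1) + 4 * q * v 0 + v 2,
        D (v 2) + 9 * q * v 1 + v 4,
        D (v 3) + 5 * q * v 1 + 2 * v 5,
        D (v 4) + 72 * q ^ 2 * v 0 + 8 * q * v 2 + 6 * q * v 3 + 11 * v 6,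
        D (v 5) + 20 * q ^ 2 * v 0 + 2 * q * v 2 + 2 * q * v 3 + 3 * v 6,
        D (v 6) + 12 * q ^ 2 * v 1 + 3 * q * v 5 + v 7,
        D (v 7) + 36 * q ^ 3 * v 0 + 12 * q ^ 2 * v 3 + 4 * q * v 6] := by
  ext j
  rw [dualConnection_apply, Fin.sum_univ_eight]
  fin_cases j <;>
    simp only [integralConnectionMatrix, of_apply, cons_val', cons_val, cons_val_zero,
      cons_val_one, cons_val_fin_one, Fin.isValue, Fin.reduceFinMk, Fin.zero_eta, Fin.mk_one] <;>
    ring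

theorem dualConnection_cyclicVectors (hq : D q = q) (n : Fin 8) :
    dualConnection D (integralConnectionMatrix q) (cyclicVectors q n.castSucc) =
      cyclicVectors q n.succ := by
  rw [dualConnection_integralConnectionMatrix]
  fin_cases n <;>
    simp only [cyclicVectors, cons_val, cons_val_zero, cons_val_one, Fin.isValue, Fin.reduceFinMk,
      Fin.zero_eta, Fin.mk_one, Fin.castSucc_zero, Fin.castSucc_one, Fin.reduceCastSucc,
      Fin.succ_zero_eq_one, Fin.succ_one_eq_two, Fin.reduceSucc, map_zero, map_add,
      Derivation.map_one_eq_zero, derivation_ofNat, Derivation.leibniz, Derivation.leibniz_pow,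
      hq, smul_eq_mul, nsmul_eq_mul, Nat.cast_ofNat] <;>
    ring_nf

theorem dualConnection_pow_single (hq : D q = q) (n : Fin 9) :
    (dualConnection D (integralConnectionMatrix q) ^ (n : ℕ)) (Pi.single 7 1) =
      cyclicVectors q n := by
  induction n using Fin.induction with
  | zero =>
    ext j
    fin_cases j <;> rfl
  | succ n ih =>
    rw [Fin.val_succ, pow_succ', Module.End.mul_apply]
    exact (congrArg _ ih).trans (dualConnection_cyclicVectors hq n)

theorem sum_quantumCoeff_smul_cyclicVectors (q : A) :
    ∑ n, quantumCoeff q n • cyclicVectors q n = 0 := by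
  ext j
  rw [sum_univ_nine]
  fin_cases j <;>
    simp only [quantumCoeff, cyclicVectors, Pi.add_apply, Pi.smul_apply, Pi.zero_apply,
      smul_eq_mul, cons_val, cons_val_zero, cons_val_one, Fin.isValue, Fin.reduceFinMk,
      Fin.zero_eta, Fin.mk_one] <;>
    ring

theorem quantumOperator_dualConnection_single_eq_zero (hq : D q = q) :
    quantumOperator q (dualConnection D (integralConnectionMatrix q)) (Pi.single 7 1) = 0 := by
  simp only [quantumOperator_apply_eq_sum_pow, dualConnection_pow_single hq,
    sum_quantumCoeff_smul_cyclicVectors]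

theorem quantumOperator_derivation_eq_zero_of_integral {s : Fin 8 → A} (hq : D q = q)
    (hs : D ∘ s = integralConnectionMatrix q *ᵥ s) :
    quantumOperator q (D : Module.End R A) (s 7) = 0 := by
  have h := quantumOperator_derivation_dotProduct q hs (Pi.single 7 1)
  simpa [quantumOperator_dualConnection_single_eq_zero hq] using h

end IntegralConnection

section RationalConnection

variable {A : Type*} [CommRing A] [Algebra ℚ A]

/-- The connection matrix `M`, with entries in an arbitrary `ℚ`-algebra. -/
def connectionMatrix (q : A) : Matrix (Fin 8) (Fin 8) A :=
  !![0, 4 * q, 0, 0, 72 * q ^ 2, 40 * q ^ 2, 0, 396 * q ^ 3;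
     1, 0, 9 * q, 5 * q, 0, 0, 132 * q ^ 2, 0;
     0, 1, 0, 0, 8 * q, 4 * q, 0, 0;
     0, 0, 0, 0, 6 * q, 4 * q, 0, 132 * q ^ 2;
     0, 0, 1, 0, 0, 0, 0, 0;
     0, 0, 0, 1, 0, 0, algebraMap ℚ A (33 / 2) * q, 0;
     0, 0, 0, 0, 1, algebraMap ℚ A (6 / 11), 0, 4 * q;
     0, 0, 0, 0, 0, 0, 1, 0]

/-- The diagonal of the gauge transformation that makes the connection matrix integral. -/
def gaugeWeights : Fin 8 → ℚ := ![1, 1, 1, 1, 1, 2, 11, 11]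

theorem gaugeWeights_smul_integralConnectionMatrix (q : A) (i j : Fin 8) :
    gaugeWeights j • integralConnectionMatrix q i j = gaugeWeights i • connectionMatrix q i j := by
  have two_mul_entry : (2 : A) * algebraMap ℚ A (33 / 2) = 33 := by
    rw [← map_ofNat (algebraMap ℚ A), ← map_mul, ← map_ofNat (algebraMap ℚ A)]
    norm_num
  have eleven_mul_entry : (11 : A) * algebraMap ℚ A (6 / 11) = 6 := by
    rw [← map_ofNat (algebraMap ℚ A), ← map_mul, ← map_ofNat (algebraMap ℚ A)]
    norm_num
  fin_cases i <;> fin_cases j <;>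
    simp only [integralConnectionMatrix, connectionMatrix, gaugeWeights, of_apply, cons_val',
      cons_val, cons_val_zero, cons_val_one, cons_val_fin_one, Fin.isValue, Fin.reduceFinMk,
      Fin.zero_eta, Fin.mk_one, Algebra.smul_def, map_one, map_ofNat, ← mul_assoc, two_mul_entry,
      eleven_mul_entry] <;>
    ring

theorem stmt_1_general (D : Derivation ℚ A A) {q : A} (hq : D q = q) {s : Fin 8 → A}
    (hs : D ∘ s = connectionMatrix q *ᵥ s) :
    quantumOperator q (D : Module.End ℚ A) (s 7) = 0 := by
  have h : quantumOperator q (D : Module.End ℚ A) ((11 : ℚ) • s 7) = 0 :=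
    quantumOperator_derivation_eq_zero_of_integral hq
      (flat_smul_of_smul_eq hs (gaugeWeights_smul_integralConnectionMatrix q))
  simpa only [map_smul, smul_eq_zero, OfNat.ofNat_ne_zero, false_or] using h

end RationalConnection

section EulerOperator

/-- The Euler operator `th` as a derivation `q · d/dq`. -/
def eulerDerivation : Derivation ℚ (PowerSeries ℚ) (PowerSeries ℚ) :=
  (X : PowerSeries ℚ) • derivative ℚ

theorem th_eq_eulerDerivation (f : PowerSeries ℚ) : th f = eulerDerivation f := by
  ext (_ | d)
  · simp [eulerDerivation, th]
  · simp [eulerDerivation, th, coeff_succ_X_mul, coeff_derivative, mul_comm]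

theorem eulerDerivation_X : eulerDerivation X = X := by
  simp [eulerDerivation]

theorem quantumOperator_eulerDerivation (f : PowerSeries ℚ) :
    quantumOperator (X : PowerSeries ℚ) (eulerDerivation : Module.End ℚ (PowerSeries ℚ)) f =
      Q0op f + X * Q1op f + X ^ 2 * Q2op f + X ^ 3 * Q3op f + X ^ 4 * Q4op f + X ^ 5 * Q5op f +
        X ^ 6 * Q6op f := by
  rw [quantumOperator_apply, Fin.sum_univ_seven]
  simp only [Q0op, Q1op, Q2op, Q3op, Q4op, Q5op, Q6op, Function.iterate_succ_apply',
    Function.iterate_zero_apply, th_eq_eulerDerivation, quantumPolynomial, cons_val, cons_val_zero,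
    cons_val_one, Fin.coe_ofNat_eq_mod, Nat.reduceMod, map_add, map_sub, map_neg, map_mul, map_one,
    map_ofNat, Polynomial.aeval_X, LinearMap.add_apply, LinearMap.sub_apply, LinearMap.neg_apply,
    Module.End.ofNat_apply, Module.End.one_apply, Module.End.mul_apply, pow_succ', pow_zero,
    Derivation.coeFn_coe, Derivation.leibniz, derivation_ofNat, nsmul_eq_mul, Nat.cast_ofNat,
    smul_eq_mul]
  ring

end EulerOperator

/-- if `s₀, …, s₇ ∈ ℚ[[q]]` satisfy `θ sᵢ = Σ_j M(q)_{ij} s_j`, then the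
quantum differential operator `Σ_{i=0}^{6} qⁱ Qᵢ(θ)` annihilates `s₇`. -/
theorem stmt_1 (s : Fin 8 → PowerSeries ℚ)
    (hs : ∀ i : Fin 8, th (s i) = ∑ j : Fin 8, M i j * s j) :
    Q0op (s 7) + X * Q1op (s 7) + X ^ 2 * Q2op (s 7) + X ^ 3 * Q3op (s 7) +
      X ^ 4 * Q4op (s 7) + X ^ 5 * Q5op (s 7) + X ^ 6 * Q6op (s 7) = 0 := by
  rw [← quantumOperator_eulerDerivation]
  refine stmt_1_general eulerDerivation eulerDerivation_X (funext fun i ↦ ?_)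
  exact (th_eq_eulerDerivation (s i)).symm.trans (hs i)

end Stmt1
end
end

section
/- Let M(q) be the 8×8 matrix over ℚ[q] with rows (indexed 0,…,7): row 0 = (0, 4q, 0, 0, 72q², 40q², 0, 396q³); row 1 = (1, 0, 9q, 5q, 0, 0, 132q², 0); row 2 = (0, 1, 0, 0, 8q, 4q, 0, 0); row 3 = (0, 0, 0, 0, 6q, 4q, 0, 132q²); row 4 = (0, 0, 1, 0, 0, 0, 0, 0); row 5 = (0, 0, 0, 1, 0, 0, (33/2)q, 0); row 6 = (0, 0, 0, 0, 1, 6/11, 0, 4q); row 7 = (0, 0, 0, 0, 0, 0, 1, 0). Suppose s_0, …, s_7 ∈ ℚ[[q]] satisfy θ s_i = Σ_{j=0}^{7} M(q)_{ij} s_j for all i, and write s_7 = Σ_{d≥0} c_d q^d. Then the series g = Σ_{d≥0} (d!)² c_d q^d satisfies P(q,θ) g = 0, where P(q,θ) = Σ_{d=0}^{6} q^d Q_d(θ) ∏_{m=1}^{d}(θ+m)² with Q_0 = 242(θ−1)²θ⁶; Q_1 = −11θ²(1615θ⁶ − 4845θ⁵ + 4598θ⁴ + 1640θ³ + 1370θ²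 + 550θ + 88); Q_2 = 103968θ⁸ − 415872θ⁷ + 1108270θ⁶ + 662150θ⁵ + 2273θ⁴ − 230318θ³ − 24299θ² + 61468θ + 19360; Q_3 = −3950784θ⁶ + 4345395θ⁴ + 1309385θ³ − 2484702θ² − 1988272θ − 440880; Q_4 = 4(233928θ⁴ + 467856θ³ + 664544θ² + 587366θ + 156697); Q_5 = −1216(1368θ² + 2736θ − 479); Q_6 = −6653952. -/
noncomputable section
namespace Stmt3

open PowerSeries

/-- The Euler operator `θ = q·d/dq` on `ℚ[[q]]`. -/
def th (f : PowerSeries ℚ) : PowerSeries ℚ :=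
  PowerSeries.mk fun d => (d : ℚ) * PowerSeries.coeff d f

/-- The connection matrix `M(q)` of the `E′`-twisted quantum connection on `G(3,7)`,
`E′ = Λ²S* ⊕ Λ³Q`, in the basis `1, s₁, s₁², s₂, s₁³, s₁s₂, s₁⁴, s₁⁵`. -/
def M : Matrix (Fin 8) (Fin 8) (PowerSeries ℚ) :=
  !![0, 4 * X, 0, 0, 72 * X ^ 2, 40 * X ^ 2, 0, 396 * X ^ 3;
     1, 0, 9 * X, 5 * X, 0, 0, 132 * X ^ 2, 0;
     0, 1, 0, 0, 8 * X, 4 * X, 0, 0;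
     0, 0, 0, 0, 6 * X, 4 * X, 0, 132 * X ^ 2;
     0, 0, 1, 0, 0, 0, 0, 0;
     0, 0, 0, 1, 0, 0, C (33 / 2 : ℚ) * X, 0;
     0, 0, 0, 0, 1, C (6 / 11 : ℚ), 0, 4 * X;
     0, 0, 0, 0, 0, 0, 1, 0]

/-- `(θ + m)` applied to a power series, for a rational constant `m`. -/
def sh (m : ℚ) (f : PowerSeries ℚ) : PowerSeries ℚ := th f + C m * f

/-- `∏_{m=1}^{d} (θ+m)²` applied to a power series. -/
def prodOp : ℕ → PowerSeries ℚ → PowerSeries ℚ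
  | 0, f => f
  | (n + 1), f => sh ((n : ℚ) + 1) (sh ((n : ℚ) + 1) (prodOp n f))

/-- `Q₀(θ) = 242(θ−1)²θ⁶` applied. -/
def Q0op (f : PowerSeries ℚ) : PowerSeries ℚ :=
  242 * ((fun g => th g - g) ((fun g => th g - g) (th^[6] f)))

/-- `Q₁(θ) = −11θ²(1615θ⁶ − 4845θ⁵ + 4598θ⁴ + 1640θ³ + 1370θ² + 550θ + 88)` applied. -/
def Q1op (f : PowerSeries ℚ) : PowerSeries ℚ :=
  -11 * th (th (1615 * th^[6] f - 4845 * th^[5] f + 4598 * th^[4] f + 1640 * th^[3] f +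
    1370 * th^[2] f + 550 * th f + 88 * f))

/-- `Q₂(θ)` applied. -/
def Q2op (f : PowerSeries ℚ) : PowerSeries ℚ :=
  103968 * th^[8] f - 415872 * th^[7] f + 1108270 * th^[6] f + 662150 * th^[5] f +
    2273 * th^[4] f - 230318 * th^[3] f - 24299 * th^[2] f + 61468 * th f + 19360 * f

/-- `Q₃(θ)` applied. -/
def Q3op (f : PowerSeries ℚ) : PowerSeries ℚ :=
  -3950784 * th^[6] f + 4345395 * th^[4] f + 1309385 * th^[3] f - 2484702 * th^[2] f -
    1988272 * th f - 440880 * f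

/-- `Q₄(θ)` applied. -/
def Q4op (f : PowerSeries ℚ) : PowerSeries ℚ :=
  4 * (233928 * th^[4] f + 467856 * th^[3] f + 664544 * th^[2] f + 587366 * th f + 156697 * f)

/-- `Q₅(θ)` applied. -/
def Q5op (f : PowerSeries ℚ) : PowerSeries ℚ :=
  -1216 * (1368 * th^[2] f + 2736 * th f - 479 * f)

/-- `Q₆(θ)` applied. -/
def Q6op (f : PowerSeries ℚ) : PowerSeries ℚ := -6653952 * f

/-- `P(q,θ) = Σ_{d=0}^{6} q^d Q_d(θ) ∏_{m=1}^{d}(θ+m)²` applied. -/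
def Pop (f : PowerSeries ℚ) : PowerSeries ℚ :=
  Q0op (prodOp 0 f) + X * Q1op (prodOp 1 f) + X ^ 2 * Q2op (prodOp 2 f) +
    X ^ 3 * Q3op (prodOp 3 f) + X ^ 4 * Q4op (prodOp 4 f) + X ^ 5 * Q5op (prodOp 5 f) +
    X ^ 6 * Q6op (prodOp 6 f)

/-!
For a flat section `s` of a connection `θ - M`, differentiating a pairing `v ⬝ᵥ s` amounts to
applying the dual connection `v ↦ θ v + v M` to `v`. Applied repeatedly to the last coordinate
covector, the dual connection of `M(q)` gives nine covectors `v₀, …, v₈` in a free module of rank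
eight, and their linear relation is a differential equation `Σ_d q^d Q_d(θ) s₇ = 0`. Multiplying the
coefficients by `(n!)²` commutes with `θ`, and moving it past `q^d` costs exactly the factor
`((n + d)! / n!)² = ∏_{m=1}^{d} (n + m)²`, which turns this equation into `P(q,θ) g = 0`.
-/

section DiagonalOperator

variable {R : Type*} [CommSemiring R]

/-- The operator `Σ c_n q^n ↦ Σ w n * c_n q^n` on power series (the Hadamard product with
`Σ w n q^n`). It models both polynomials in `θ` and hypergeometric modifications. -/
def diagonal (w : ℕ → R) : R⟦X⟧ →ₗ[R] R⟦X⟧ where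
  toFun f := mk fun n ↦ w n * coeff n f
  map_add' f g := by ext n; simp [mul_add]
  map_smul' a f := by ext n; simp [mul_left_comm]

@[simp]
lemma coeff_diagonal (w : ℕ → R) (f : R⟦X⟧) (n : ℕ) :
    coeff n (diagonal w f) = w n * coeff n f := by
  simp [diagonal]

lemma diagonal_comm (v w : ℕ → R) (f : R⟦X⟧) :
    diagonal v (diagonal w f) = diagonal w (diagonal v f) := by
  ext n
  simp only [coeff_diagonal, mul_left_comm]

lemma ofNat_mul_diagonal (a : ℕ) [a.AtLeastTwo] (w : ℕ → R) (f : R⟦X⟧) :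
    ofNat(a) * diagonal w f = diagonal w (ofNat(a) * f) := by
  rw [← map_ofNat (C (R := R)) a, ← smul_eq_C_mul, ← smul_eq_C_mul, map_smul]

lemma X_pow_mul_diagonal_add (w : ℕ → R) (d : ℕ) (f : R⟦X⟧) :
    X ^ d * diagonal (fun n ↦ w (n + d)) f = diagonal w (X ^ d * f) := by
  ext n
  simp only [coeff_diagonal, coeff_X_pow_mul']
  split_ifs with h
  · rw [Nat.sub_add_cancel h]
  · rw [mul_zero]

lemma X_mul_diagonal_add_one (w : ℕ → R) (f : R⟦X⟧) :
    X * diagonal (fun n ↦ w (n + 1)) f = diagonal w (X * f) := by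
  simpa only [pow_one] using X_pow_mul_diagonal_add w 1 f

end DiagonalOperator

section EulerOperator

variable (w : ℕ → ℚ) (f : ℚ⟦X⟧)

lemma coeff_th (n : ℕ) : coeff n (th f) = n * coeff n f := by
  simp [th]

lemma th_diagonal : th (diagonal w f) = diagonal w (th f) :=
  diagonal_comm (fun n ↦ (n : ℚ)) w f

lemma th_iterate_diagonal (k : ℕ) : th^[k] (diagonal w f) = diagonal w (th^[k] f) :=
  Function.Commute.iterate_left (th_diagonal w) k f

lemma th_ofNat_mul (a : ℕ) [a.AtLeastTwo] : th (ofNat(a) * f) = ofNat(a) * th f :=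
  (ofNat_mul_diagonal a _ f).symm

lemma th_iterate_smul (a : ℚ) (k : ℕ) : th^[k] (a • f) = a • th^[k] f :=
  Function.Commute.iterate_left (g := (a • ·)) (map_smul (diagonal fun n ↦ (n : ℚ)) a) k f

lemma sh_diagonal (m : ℚ) : sh m (diagonal w f) = diagonal (fun n ↦ (n + m) * w n) f := by
  ext n
  simp only [sh, map_add, coeff_th, coeff_C_mul, coeff_diagonal]
  ring

variable (R : Type*) [CommSemiring R]

/-- The Euler operator `θ = q·d/dq` as a derivation. -/
def eulerDerivation : Derivation R R⟦X⟧ R⟦X⟧ :=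
  (X : R⟦X⟧) • derivative R

lemma eulerDerivation_apply (f : R⟦X⟧) : eulerDerivation R f = X * derivative R f :=
  rfl

lemma coe_eulerDerivation : ⇑(eulerDerivation ℚ) = th := by
  ext f n
  rw [eulerDerivation_apply, coeff_th]
  cases n with
  | zero => simp
  | succ n => rw [coeff_succ_X_mul, coeff_derivative, mul_comm]; push_cast; rfl

lemma eulerDerivation_X : eulerDerivation R X = X := by
  rw [eulerDerivation_apply, derivative_X, mul_one]

lemma eulerDerivation_X_pow (n : ℕ) : eulerDerivation R (X ^ n) = n * (X : R⟦X⟧) ^ n := by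
  cases n with
  | zero => simp
  | succ n => rw [Derivation.leibniz_pow, eulerDerivation_X, nsmul_eq_mul, smul_eq_mul,
      Nat.add_sub_cancel, pow_succ]

lemma eulerDerivation_ofNat (a : ℕ) [a.AtLeastTwo] : eulerDerivation R ofNat(a) = 0 := by
  rw [← Nat.cast_ofNat, Derivation.map_natCast]

end EulerOperator

section HypergeometricModification

/-- The hypergeometric modification `Σ c_n q^n ↦ Σ (n!)² c_n q^n` attached to `O(1)^{⊕2}`. -/
def lefschetzTwist : ℚ⟦X⟧ →ₗ[ℚ] ℚ⟦X⟧ :=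
  diagonal fun n ↦ (n.factorial : ℚ) ^ 2

variable (w : ℕ → ℚ) (f : ℚ⟦X⟧)

lemma prodOp_lefschetzTwist (d : ℕ) :
    prodOp d (lefschetzTwist f) = diagonal (fun n ↦ ((n + d).factorial : ℚ) ^ 2) f := by
  induction d with
  | zero => rfl
  | succ d ih =>
    rw [prodOp, ih, sh_diagonal, sh_diagonal]
    congr 2 with n
    rw [← Nat.add_assoc, Nat.factorial_succ]
    push_cast
    ring

lemma Q0op_diagonal : Q0op (diagonal w f) = diagonal w (Q0op f) := by
  simp only [Q0op, th_diagonal, th_iterate_diagonal, ofNat_mul_diagonal, ← map_sub]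

lemma Q1op_diagonal : Q1op (diagonal w f) = diagonal w (Q1op f) := by
  simp only [Q1op, th_diagonal, th_iterate_diagonal, ofNat_mul_diagonal, ← map_add, ← map_sub,
    neg_mul, map_neg]

lemma Q2op_diagonal : Q2op (diagonal w f) = diagonal w (Q2op f) := by
  simp only [Q2op, th_diagonal, th_iterate_diagonal, ofNat_mul_diagonal, map_add, map_sub]

lemma Q3op_diagonal : Q3op (diagonal w f) = diagonal w (Q3op f) := by
  simp only [Q3op, th_diagonal, th_iterate_diagonal, ofNat_mul_diagonal, map_add, map_sub, neg_mul,
    map_neg]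

lemma Q4op_diagonal : Q4op (diagonal w f) = diagonal w (Q4op f) := by
  simp only [Q4op, th_diagonal, th_iterate_diagonal, ofNat_mul_diagonal, ← map_add]

lemma Q5op_diagonal : Q5op (diagonal w f) = diagonal w (Q5op f) := by
  simp only [Q5op, th_diagonal, th_iterate_diagonal, ofNat_mul_diagonal, ← map_add, ← map_sub,
    neg_mul, map_neg]

lemma Q6op_diagonal : Q6op (diagonal w f) = diagonal w (Q6op f) := by
  simp only [Q6op, ofNat_mul_diagonal, neg_mul, map_neg]

/-- The operator `Σ_d q^d Q_d(θ)`, that is, `P(q,θ)` without its hypergeometric factors. -/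
def untwistedOp (f : ℚ⟦X⟧) : ℚ⟦X⟧ :=
  Q0op f + X * Q1op f + X ^ 2 * Q2op f + X ^ 3 * Q3op f + X ^ 4 * Q4op f + X ^ 5 * Q5op f +
    X ^ 6 * Q6op f

theorem Pop_lefschetzTwist : Pop (lefschetzTwist f) = lefschetzTwist (untwistedOp f) := by
  simp only [Pop, untwistedOp, prodOp_lefschetzTwist, Q0op_diagonal, Q1op_diagonal, Q2op_diagonal,
    Q3op_diagonal, Q4op_diagonal, Q5op_diagonal, Q6op_diagonal, map_add]
  simp only [lefschetzTwist, add_zero,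
    X_mul_diagonal_add_one fun n ↦ (n.factorial : ℚ) ^ 2,
    X_pow_mul_diagonal_add fun n ↦ (n.factorial : ℚ) ^ 2]

end HypergeometricModification

section DualConnection

variable {R A ι : Type*} [CommSemiring R] [CommSemiring A] [Algebra R A] [Fintype ι]
  (D : Derivation R A A) (N : Matrix ι ι A)

open scoped Matrix

/-- The dual `v ↦ D v + v N` of the connection `s ↦ D s - N s`, acting on row vectors. -/
def dualConnection (v : ι → A) : ι → A :=
  D ∘ v + v ᵥ* N

variable {D N} {s : ι → A}

lemma derivation_dotProduct_of_flat (hs : D ∘ s = N *ᵥ s) (v : ι → A) :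
    D (v ⬝ᵥ s) = dualConnection D N v ⬝ᵥ s := by
  calc D (v ⬝ᵥ s) = (D ∘ v) ⬝ᵥ s + v ⬝ᵥ (D ∘ s) := by
        simp only [dotProduct, map_sum, Derivation.leibniz, smul_eq_mul, Function.comp_apply,
          Finset.sum_add_distrib, mul_comm (s _), add_comm]
    _ = dualConnection D N v ⬝ᵥ s := by
        rw [hs, Matrix.dotProduct_mulVec, dualConnection, add_dotProduct]

lemma derivation_iterate_dotProduct_of_flat (hs : D ∘ s = N *ᵥ s) (k : ℕ) (v : ι → A) :
    D^[k] (v ⬝ᵥ s) = (dualConnection D N)^[k] v ⬝ᵥ s :=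
  (Function.Semiconj.iterate_right (f := (· ⬝ᵥ s))
    (fun v ↦ (derivation_dotProduct_of_flat hs v).symm) k v).symm

lemma sum_mul_derivation_iterate_dotProduct_eq_zero (hs : D ∘ s = N *ᵥ s) {n : ℕ} (p : Fin n → A)
    (v : ι → A) (hv : ∑ k, p k • (dualConnection D N)^[k] v = 0) :
    ∑ k, p k * D^[k] (v ⬝ᵥ s) = 0 := by
  simp only [derivation_iterate_dotProduct_of_flat hs, ← smul_eq_mul, ← smul_dotProduct,
    ← sum_dotProduct, hv, zero_dotProduct]

end DualConnection

section CyclicCovector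

open scoped Matrix

/-- The covectors `11 ∇ᵏ e₇`, `0 ≤ k ≤ 8`, where `e₇` is the last coordinate covector and `∇` the
dual connection of `M`; the factor `11` clears all denominators. The last three columns carry the
explicit factors `2`, `11`, `11` of `dualConnection_M`, which absorb the entries `33/2` and `6/11`
of `M`. -/
def cyclicCovector : Matrix (Fin 9) (Fin 8) ℚ⟦X⟧ :=
  !![0, 0, 0, 0, 0, 2 * 0, 11 * 0, 11 * 1;
     0, 0, 0, 0, 0, 2 * 0, 11 * 1, 11 * 0;
     0, 0, 0, 0, 11, 2 * 3, 11 * 0, 11 * (4 * X);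
     0, 0, 11, 6, 0, 2 * 0, 11 * (13 * X), 11 * (4 * X);
     0, 11, 0, 0, 267 * X, 2 * (73 * X), 11 * (17 * X), 11 * (4 * X + 124 * X ^ 2);
     11, 0, 366 * X, 201 * X, 454 * X, 2 * (124 * X), 11 * (21 * X + 475 * X ^ 2),
       11 * (4 * X + 316 * X ^ 2);
     0, 410 * X, 820 * X, 449 * X, 685 * X + 10151 * X ^ 2, 2 * (187 * X + 2779 * X ^ 2),
       11 * (25 * X + 1638 * X ^ 2), 11 * (4 * X + 716 * X ^ 2 + 4708 * X ^ 3);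
     410 * X, 1230 * X, 1505 * X + 13841 * X ^ 2, 823 * X + 7608 * X ^ 2, 960 * X + 47574 * X ^ 2,
       2 * (262 * X + 13010 * X ^ 2), 11 * (29 * X + 4553 * X ^ 2 + 17965 * X ^ 3),
       11 * (4 * X + 1532 * X ^ 2 + 26064 * X ^ 3);
     1640 * X, 2735 * X + 15481 * X ^ 2, 2465 * X + 86326 * X ^ 2, 1347 * X + 47386 * X ^ 2,
       1279 * X + 162209 * X ^ 2 + 383511 * X ^ 3, 2 * (349 * X + 44335 * X ^ 2 + 104993 * X ^ 3),
       11 * (33 * X + 11424 * X ^ 2 + 133749 * X ^ 3),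
       11 * (4 * X + 3180 * X ^ 2 + 106280 * X ^ 3 + 177916 * X ^ 4)]

/-- The coefficients `p₀, …, p₈` of `Σ_d q^d Q_d(θ) = Σ_k p_k(q) θᵏ`. -/
def untwistedCoeff : Fin 9 → ℚ⟦X⟧ :=
  ![19360 * X ^ 2 - 440880 * X ^ 3 + 626788 * X ^ 4 + 582464 * X ^ 5 - 6653952 * X ^ 6,
    61468 * X ^ 2 - 1988272 * X ^ 3 + 2349464 * X ^ 4 - 3326976 * X ^ 5,
    -968 * X - 24299 * X ^ 2 - 2484702 * X ^ 3 + 2658176 * X ^ 4 - 1663488 * X ^ 5,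
    -6050 * X - 230318 * X ^ 2 + 1309385 * X ^ 3 + 1871424 * X ^ 4,
    -15070 * X + 2273 * X ^ 2 + 4345395 * X ^ 3 + 935712 * X ^ 4,
    -18040 * X + 662150 * X ^ 2,
    242 - 50578 * X + 1108270 * X ^ 2 - 3950784 * X ^ 3,
    -484 + 53295 * X - 415872 * X ^ 2,
    242 - 17765 * X + 103968 * X ^ 2]

lemma untwistedOp_eq_sum (f : ℚ⟦X⟧) : untwistedOp f = ∑ k, untwistedCoeff k * th^[k] f := by
  have th_add (f g : ℚ⟦X⟧) : th (f + g) = th f + th g := map_add (diagonal _) f g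
  have th_sub (f g : ℚ⟦X⟧) : th (f - g) = th f - th g := map_sub (diagonal _) f g
  simp only [untwistedOp, Q0op, Q1op, Q2op, Q3op, Q4op, Q5op, Q6op, untwistedCoeff,
    Fin.sum_univ_castSucc (n := 8), Fin.sum_univ_eight, Matrix.cons_val,
    Fin.reduceCastSucc, Fin.reduceLast, Fin.coe_ofNat_eq_mod, Nat.reduceMod,
    Function.iterate_succ_apply', Function.iterate_zero_apply, th_ofNat_mul, th_add, th_sub]
  ring

lemma untwistedCoeff_vecMul_cyclicCovector : untwistedCoeff ᵥ* cyclicCovector = 0 := by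
  ext1 j
  fin_cases j
  all_goals
    simp only [untwistedCoeff, cyclicCovector, Matrix.vecMul_cons, Matrix.empty_vecMul,
      Matrix.head_cons, Matrix.tail_cons, Matrix.smul_cons, Matrix.smul_empty, Matrix.cons_val,
      Fin.zero_eta, Fin.mk_one, Fin.reduceFinMk, Pi.add_apply, Pi.zero_apply, smul_eq_mul]
    ring

local notation "θ" => eulerDerivation ℚ

lemma dualConnection_M (a₀ a₁ a₂ a₃ a₄ a₅ a₆ a₇ : ℚ⟦X⟧) :
    dualConnection θ M ![a₀, a₁, a₂, a₃, a₄, 2 * a₅, 11 * a₆, 11 * a₇] =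
      ![θ a₀ + a₁,
        θ a₁ + (4 * X * a₀ + a₂),
        θ a₂ + (9 * X * a₁ + a₄),
        θ a₃ + (5 * X * a₁ + 2 * a₅),
        θ a₄ + (72 * X ^ 2 * a₀ + 8 * X * a₂ + 6 * X * a₃ + 11 * a₆),
        2 * (θ a₅ + (20 * X ^ 2 * a₀ + 2 * X * a₂ + 2 * X * a₃ + 3 * a₆)),
        11 * (θ a₆ + (12 * X ^ 2 * a₁ + 3 * X * a₅ + a₇)),
        11 * (θ a₇ + (36 * X ^ 3 * a₀ + 12 * X ^ 2 * a₃ + 4 * X * a₆))] := by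
  have eleven_mul_C : (11 : ℚ⟦X⟧) * C (6 / 11) = 6 := by
    rw [← map_ofNat C, ← map_mul, ← map_ofNat C]; norm_num
  have two_mul_C : (2 : ℚ⟦X⟧) * C (33 / 2) = 33 := by
    rw [← map_ofNat C, ← map_mul, ← map_ofNat C]; norm_num
  ext1 j
  fin_cases j
  all_goals
    simp only [dualConnection, M, Matrix.vecMul_cons, Matrix.empty_vecMul, Matrix.head_cons,
      Matrix.tail_cons, Matrix.smul_cons, Matrix.smul_empty, Matrix.cons_val, Fin.zero_eta,
      Fin.mk_one, Fin.reduceFinMk, Pi.add_apply, Pi.zero_apply, Function.comp_apply,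
      Derivation.leibniz, eulerDerivation_ofNat, smul_eq_mul]
  on_goal 7 => linear_combination a₅ * X * two_mul_C
  on_goal 6 => linear_combination a₆ * eleven_mul_C
  all_goals ring

lemma dualConnection_cyclicCovector (k : Fin 8) :
    dualConnection θ M (cyclicCovector k.castSucc) = cyclicCovector k.succ := by
  fin_cases k
  all_goals
    change dualConnection θ M ![_, _, _, _, _, 2 * _, 11 * _, 11 * _] = ![_, _, _, _, _, _, _, _]
    rw [dualConnection_M]
    simp only [map_zero, map_add, Derivation.leibniz, Derivation.map_one_eq_zero, smul_eq_mul,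
      eulerDerivation_X, eulerDerivation_X_pow, eulerDerivation_ofNat]
    push_cast
    ring_nf

lemma dualConnection_iterate_cyclicCovector (k : Fin 9) :
    (dualConnection θ M)^[k] (cyclicCovector 0) = cyclicCovector k := by
  induction k using Fin.induction with
  | zero => rfl
  | succ k ih =>
    rw [Fin.val_succ, Function.iterate_succ_apply', ← dualConnection_cyclicCovector, ← ih,
      Fin.val_castSucc]

lemma cyclicCovector_zero_dotProduct (s : Fin 8 → ℚ⟦X⟧) :
    cyclicCovector 0 ⬝ᵥ s = (11 : ℚ) • s 7 := by
  simp [cyclicCovector, dotProduct, Fin.sum_univ_succ, smul_eq_C_mul, map_ofNat]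

lemma untwistedOp_smul (a : ℚ) (f : ℚ⟦X⟧) : untwistedOp (a • f) = a • untwistedOp f := by
  simp only [untwistedOp_eq_sum, th_iterate_smul, mul_smul_comm, Finset.smul_sum]

theorem untwistedOp_eq_zero_of_flat {s : Fin 8 → ℚ⟦X⟧} (hs : θ ∘ s = M *ᵥ s) :
    untwistedOp (s 7) = 0 := by
  have relation : ∑ k, untwistedCoeff k • (dualConnection θ M)^[k] (cyclicCovector 0) = 0 := by
    simp only [dualConnection_iterate_cyclicCovector]
    rw [← untwistedCoeff_vecMul_cyclicCovector, Matrix.vecMul_eq_sum]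
  have annihilates : untwistedOp ((11 : ℚ) • s 7) = 0 := by
    rw [untwistedOp_eq_sum, ← cyclicCovector_zero_dotProduct, ← coe_eulerDerivation]
    exact sum_mul_derivation_iterate_dotProduct_eq_zero hs _ _ relation
  rw [untwistedOp_smul] at annihilates
  exact (smul_eq_zero.mp annihilates).resolve_left (by norm_num)

end CyclicCovector

/-- quantum Lefschetz for `O(1)^{⊕2}`: if `s₀, …, s₇ ∈ ℚ[[q]]` satisfy
`θ sᵢ = Σ_j M(q)_{ij} s_j` and `s₇ = Σ c_d q^d`, then `g = Σ (d!)² c_d q^d` is annihilated by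
`P(q,θ)`. -/
theorem stmt_3 (s : Fin 8 → PowerSeries ℚ)
    (hs : ∀ i : Fin 8, th (s i) = ∑ j : Fin 8, M i j * s j)
    (g : PowerSeries ℚ)
    (hg : g = PowerSeries.mk fun d => ((d.factorial : ℚ)) ^ 2 * PowerSeries.coeff d (s 7)) :
    Pop g = 0 := by
  have flat : eulerDerivation ℚ ∘ s = M.mulVec s := by
    ext1 i
    rw [coe_eulerDerivation]
    exact hs i
  have g_eq : g = lefschetzTwist (s 7) := hg
  rw [g_eq, Pop_lefschetzTwist, untwistedOp_eq_zero_of_flat flat, map_zero]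

end Stmt3
end
end

section
/- For d ≥ 0 define a_d = (−1)^d Σ_{d₁+d₂=d, d₁,d₂≥0} [(2d₁+d₂)!·(d₁+2d₂)!·(2d₁+2d₂)! / ((d₁!)⁵(d₂!)⁵)] · [1 + (d₁−d₂)·((1/2)(H_{2d₁+d₂} − H_{d₁+2d₂}) − (5/2)(H_{d₁} − H_{d₂}))]. Then the formal power series I₀(q) = Σ_{d≥0} a_d q^d ∈ ℚ[[q]] (with a₀ = 1, a₁ = 10, a₂ = 438) satisfies the fourth-order differential equation {θ⁴ − 2q(2θ+1)²(17θ²+17θ+5) + 4q²(θ+1)²(2θ+1)(2θ+3)} I₀ = 0. -/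
noncomputable section
namespace Stmt4

open PowerSeries

/-- The Euler operator `θ = q·d/dq` on `ℚ[[q]]`. -/
def th (f : PowerSeries ℚ) : PowerSeries ℚ :=
  PowerSeries.mk fun d => (d : ℚ) * PowerSeries.coeff d f

/-- `n`-th harmonic number `H_n = Σ_{m=1}^n 1/m` (with `H_0 = 0`). -/
def H (n : ℕ) : ℚ := ∑ m ∈ Finset.range n, 1 / ((m : ℚ) + 1)

/-- Coefficients of the `I`-function of Calabi–Yau No. 4 (`S*(1) ⊕ O(2)` on `G(2,5)`). -/
def a (d : ℕ) : ℚ :=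
  (-1 : ℚ) ^ d * ∑ d₁ ∈ Finset.range (d + 1),
    (((2 * d₁ + (d - d₁)).factorial : ℚ) * ((d₁ + 2 * (d - d₁)).factorial : ℚ) *
        ((2 * d₁ + 2 * (d - d₁)).factorial : ℚ)) /
      (((d₁.factorial : ℚ)) ^ 5 * (((d - d₁).factorial : ℚ)) ^ 5) *
      (1 + ((d₁ : ℚ) - ((d - d₁ : ℕ) : ℚ)) *
        ((1 / 2) * (H (2 * d₁ + (d - d₁)) - H (d₁ + 2 * (d - d₁))) -
          (5 / 2) * (H d₁ - H (d - d₁))))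

/-!
The coefficient `a d` is `centralBinom d` times an Apéry number `A d`, which arises here from a
very-well-poised sum: replacing `(k, j)` by `(k + ε, j - ε)` in
`(-1)ⁿ (k - j) n!² (n + k)! (n + j)! / (k!⁵ j!⁵)`, with `k + j = n`, and extracting the coefficient
of `ε` over `ℚ[ε]` with `ε² = 0` produces the harmonic numbers in `a d`. The shifted summand obeys
the same first-order recurrences as a hypergeometric term, so creative telescoping applies to it
over any `ℚ`-algebra; the boundary terms of the telescoping cancel modulo `ε⁵`. This gives
Apéry's recurrence `(n + 1)³ A (n + 1) - (2n + 1)(17n² + 17n + 5) A n + n³ A (n - 1) = 0`, and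
multiplication by `centralBinom` turns it into the recurrence encoded by the differential operator.
-/

open Finset
open scoped Ring

section AperySequence

/-- The middle coefficient of Apéry's recurrence for `ζ(3)`. -/
def aperyCoeff (n : ℕ) : ℕ := (2 * n + 1) * (17 * n ^ 2 + 17 * n + 5)

/-- The sequence satisfies Apéry's recurrence for `ζ(3)`. It is written with natural-number
multiples and without subtraction, so that it passes along additive maps. -/
def IsAperySequence {M : Type*} [AddCommMonoid M] (u : ℕ → M) : Prop :=
  ∀ n, (n + 2) ^ 3 • u (n + 2) + (n + 1) ^ 3 • u n = aperyCoeff (n + 1) • u (n + 1)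

lemma IsAperySequence.map {M N : Type*} [AddCommMonoid M] [AddCommMonoid N] {u : ℕ → M}
    (hu : IsAperySequence u) (φ : M →+ N) : IsAperySequence fun n => φ (u n) := fun n => by
  simpa only [map_add, map_nsmul] using congrArg φ (hu n)

lemma IsAperySequence.centralBinom_mul_recurrence {R : Type*} [CommRing R] {u : ℕ → R}
    (hu : IsAperySequence u) (n : ℕ) :
    ((n : R) + 2) ^ 4 * ((n + 2).centralBinom * u (n + 2)) -
      2 * (2 * n + 3) ^ 2 * (17 * ((n : R) + 1) ^ 2 + 17 * (n + 1) + 5) *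
        ((n + 1).centralBinom * u (n + 1)) +
      4 * ((n : R) + 1) ^ 2 * (2 * n + 1) * (2 * n + 3) * (n.centralBinom * u n) = 0 := by
  have hrec := hu n
  have hbinom := congrArg (Nat.cast (R := R)) (Nat.succ_mul_centralBinom_succ n)
  have hbinom' := congrArg (Nat.cast (R := R)) (Nat.succ_mul_centralBinom_succ (n + 1))
  simp only [nsmul_eq_mul, aperyCoeff] at hrec
  push_cast at hrec hbinom hbinom'
  linear_combination ((n : R) + 2) ^ 3 * u (n + 2) * hbinom' +
    2 * (2 * n + 3) * ((n + 1).centralBinom : R) * hrec -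
    2 * (2 * n + 3) * ((n : R) + 1) ^ 2 * u n * hbinom

end AperySequence

section ShiftedFactorial

variable {R : Type*} [CommRing R]

/-- The rising product `(1 + x)(2 + x) ⋯ (n + x)`, that is `Γ(n + 1 + x) / Γ(1 + x)`. -/
def shiftedFactorial (x : R) (n : ℕ) : R := (ascPochhammer R n).eval (1 + x)

lemma shiftedFactorial_succ (x : R) (n : ℕ) :
    shiftedFactorial x (n + 1) = (n + 1 + x) * shiftedFactorial x n := by
  rw [shiftedFactorial, shiftedFactorial, ascPochhammer_succ_eval]
  ring

lemma inverse_shiftedFactorial_eq_mul [Algebra ℚ R] {x : R} (hx : IsNilpotent x) (n : ℕ) :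
    (shiftedFactorial x n)⁻¹ʳ = (n + 1 + x) * (shiftedFactorial x (n + 1))⁻¹ʳ := by
  have hn : IsUnit ((n : R) + 1) := by
    have h : IsUnit (algebraMap ℚ R (n + 1)) := (Nat.cast_add_one_ne_zero n).isUnit.map _
    simpa only [map_add, map_natCast, map_one] using h
  have hunit : IsUnit ((n : R) + 1 + x) := hx.isUnit_add_left_of_commute hn (.all _ _)
  rw [shiftedFactorial_succ, Ring.mul_inverse_rev, mul_left_comm, Ring.mul_inverse_cancel _ hunit,
    mul_one]

end ShiftedFactorial

section Certificate

variable {R : Type*} [CommRing R]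

/-- The polynomial factor of the creative-telescoping certificate of `wellPoisedTerm`. -/
def certPoly (n x : R) : R :=
  (153 * n ^ 6 + 567 * n ^ 5 + 804 * n ^ 4 + 540 * n ^ 3 + 171 * n ^ 2 + 21 * n) -
    (384 * n ^ 5 + 1112 * n ^ 4 + 1177 * n ^ 3 + 565 * n ^ 2 + 127 * n + 11) * x +
    (358 * n ^ 4 + 741 * n ^ 3 + 526 * n ^ 2 + 165 * n + 22) * x ^ 2 -
    (134 * n ^ 3 + 158 * n ^ 2 + 58 * n + 10) * x ^ 3 +
    (4 * n ^ 2 - 13 * n - 5) * x ^ 4 + (8 * n + 5) * x ^ 5 - x ^ 6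

lemma certPoly_telescope {n x y : R} (h : n = x + y) :
    (n + 2) ^ 5 * (x - y - 2) * (n + 1 + x) * (n + 2 + x) *
        ((n + 1 + y) * (n + 2 + y) * (n + 3 + y) * (n + 4 + y)) +
      (2 * n + 3) * (17 * (n + 1) ^ 2 + 17 * (n + 1) + 5) * (x - y - 1) * (n + 1 + x) *
        ((n + 1 + y) * (n + 2 + y)) * (y + 2) ^ 5 +
      (n + 1) * (x - y) * ((y + 1) * (y + 2)) ^ 5 =
    certPoly (n + 1) x * (n + 1 + y) * x ^ 5 -
      certPoly (n + 1) (x + 1) * (n + 1 + x) * (y + 2) ^ 5 := by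
  subst h
  unfold certPoly
  ring

lemma certPoly_boundary {ε : R} (hε : ε ^ 5 = 0) (n : R) :
    -(n + 1) ^ 5 * (n - 1 + 2 * ε) * (2 * n + ε) * (2 * n + 1 + ε) *
          ((n - ε) * (n + 1 - ε) * (n + 2 - ε)) * (n + 1 + ε) ^ 5 -
        (n + 1) ^ 5 * (n + 1 + 2 * ε) * (2 * n + ε) * (2 * n + 1 + ε) * (2 * n + 2 + ε) *
          ((n - ε) * (n + 1 - ε)) * (1 - ε) ^ 5 -
        (2 * n + 1) * (17 * n ^ 2 + 17 * n + 5) * (n + 2 * ε) * (2 * n + ε) * (n - ε) *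
          (n + 1 + ε) ^ 5 * (1 - ε) ^ 5 +
      ((n + 1 + ε) * (n + ε)) ^ 5 * certPoly n (n + ε) = 0 := by
  unfold certPoly
  grind

end Certificate

section WellPoised

variable {R : Type*} [CommRing R]

/-- The summand `(-1)ⁿ (x - y) n!² (n + x)! (n + y)! / (x!⁵ y!⁵)` at `x = k + ε`, `y = j - ε`,
up to a factor independent of `n`, `k` and `j`. It is meant for `k + j = n`; at `ε = 0` it is
`(-1)ⁿ (k - j) (n choose k)⁴ (n + k choose n) (n + j choose n)`. -/
def wellPoisedTerm (ε : R) (n k j : ℕ) : R :=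
  (-1) ^ n * (n.factorial : R) ^ 2 * (k - j + 2 * ε) *
    shiftedFactorial ε (n + k) * shiftedFactorial (-ε) (n + j) *
    (shiftedFactorial ε k)⁻¹ʳ ^ 5 * (shiftedFactorial (-ε) j)⁻¹ʳ ^ 5

/-- The companion of `wellPoisedTerm` in the creative telescoping of Apéry's recurrence, meant for
`k + j = n + 1`. -/
def wellPoisedCompanion (ε : R) (n k j : ℕ) : R :=
  (-1) ^ n * ((n + 1).factorial : R) ^ 2 * certPoly ((n : R) + 1) (k + ε) *
    shiftedFactorial ε (n + k) * shiftedFactorial (-ε) (n + j) *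
    ((k + ε) * (shiftedFactorial ε k)⁻¹ʳ) ^ 5 * (shiftedFactorial (-ε) (j + 1))⁻¹ʳ ^ 5

/-- The common factor of all terms in the telescoping relation `wellPoisedTerm_telescope`. -/
def wellPoisedBase (ε : R) (n k j : ℕ) : R :=
  (-1) ^ n * (n.factorial : R) ^ 2 * shiftedFactorial ε (n + k) * shiftedFactorial (-ε) (n + j) *
    (shiftedFactorial ε k)⁻¹ʳ ^ 5 * (shiftedFactorial (-ε) (j + 2))⁻¹ʳ ^ 5

/-- The very-well-poised deformation of Apéry's sums. -/
def wellPoisedSum (ε : R) (n : ℕ) : R := ∑ p ∈ antidiagonal n, wellPoisedTerm ε n p.1 p.2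

lemma wellPoisedCompanion_zero_left {ε : R} (hε : ε ^ 5 = 0) (n j : ℕ) :
    wellPoisedCompanion ε n 0 j = 0 := by
  simp only [wellPoisedCompanion, Nat.cast_zero, zero_add, mul_pow, hε, zero_mul, mul_zero]

lemma wellPoisedTerm_add_two (ε : R) (n k j : ℕ) :
    wellPoisedTerm ε (n + 2) k (j + 2) = wellPoisedBase ε n k j *
      (((n : R) + 1) ^ 2 * (n + 2) ^ 2 * ((k + ε) - (j - ε) - 2) *
        (n + 1 + (k + ε)) * (n + 2 + (k + ε)) *
        ((n + 1 + (j - ε)) * (n + 2 + (j - ε)) * (n + 3 + (j - ε)) * (n + 4 + (j - ε)))) := by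
  have hk : n + 2 + k = n + k + 1 + 1 := by omega
  have hj : n + 2 + (j + 2) = n + j + 1 + 1 + 1 + 1 := by omega
  simp only [wellPoisedTerm, wellPoisedBase, hk, hj, shiftedFactorial_succ _ (n + _),
    shiftedFactorial_succ _ (n + _ + _), Nat.factorial_succ]
  push_cast
  ring

lemma wellPoisedCompanion_succ_right (ε : R) (n k j : ℕ) :
    wellPoisedCompanion ε n k (j + 1) = wellPoisedBase ε n k j *
      (((n : R) + 1) ^ 2 * certPoly ((n : R) + 1) (k + ε) * (n + 1 + (j - ε)) * (k + ε) ^ 5) := by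
  simp only [wellPoisedCompanion, wellPoisedBase, ← add_assoc, shiftedFactorial_succ _ (n + j),
    Nat.factorial_succ]
  push_cast
  ring

variable [Algebra ℚ R] {ε : R}

lemma wellPoisedTerm_add_one (hε : IsNilpotent ε) (n k j : ℕ) :
    wellPoisedTerm ε (n + 1) k (j + 1) = -wellPoisedBase ε n k j *
      (((n : R) + 1) ^ 2 * ((k + ε) - (j - ε) - 1) * (n + 1 + (k + ε)) *
        ((n + 1 + (j - ε)) * (n + 2 + (j - ε))) * ((j - ε) + 2) ^ 5) := by
  have hj : n + 1 + (j + 1) = n + j + 1 + 1 := by omega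
  simp only [wellPoisedTerm, wellPoisedBase, add_right_comm n 1 k, hj,
    shiftedFactorial_succ _ (n + _), shiftedFactorial_succ _ (n + _ + _), Nat.factorial_succ,
    inverse_shiftedFactorial_eq_mul hε.neg (j + 1)]
  push_cast
  ring

lemma wellPoisedTerm_eq_base_mul (hε : IsNilpotent ε) (n k j : ℕ) :
    wellPoisedTerm ε n k j = wellPoisedBase ε n k j *
      (((k + ε) - (j - ε)) * (((j - ε) + 1) * ((j - ε) + 2)) ^ 5) := by
  simp only [wellPoisedTerm, wellPoisedBase, inverse_shiftedFactorial_eq_mul hε.neg j,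
    inverse_shiftedFactorial_eq_mul hε.neg (j + 1)]
  push_cast
  ring

lemma wellPoisedCompanion_succ_left (hε : IsNilpotent ε) (n k j : ℕ) :
    wellPoisedCompanion ε n (k + 1) j = wellPoisedBase ε n k j *
      (((n : R) + 1) ^ 2 * certPoly ((n : R) + 1) ((k + ε) + 1) * (n + 1 + (k + ε)) *
        ((j - ε) + 2) ^ 5) := by
  have hx : ((k + 1 : ℕ) : R) + ε = (k + ε) + 1 := by push_cast; ring
  have hcancel : (k + ε + 1) * (shiftedFactorial ε (k + 1))⁻¹ʳ = (shiftedFactorial ε k)⁻¹ʳ := by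
    rw [inverse_shiftedFactorial_eq_mul hε k, add_right_comm]
  simp only [wellPoisedCompanion, wellPoisedBase, hx, hcancel, ← add_assoc,
    shiftedFactorial_succ _ (n + k), Nat.factorial_succ,
    inverse_shiftedFactorial_eq_mul hε.neg (j + 1)]
  push_cast
  ring

lemma wellPoisedTerm_telescope (hε : IsNilpotent ε) {n k j : ℕ} (hn : k + j = n) :
    ((n : R) + 2) ^ 3 * wellPoisedTerm ε (n + 2) k (j + 2) -
        aperyCoeff (n + 1) * wellPoisedTerm ε (n + 1) k (j + 1) +
        ((n : R) + 1) ^ 3 * wellPoisedTerm ε n k j =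
      wellPoisedCompanion ε n k (j + 1) - wellPoisedCompanion ε n (k + 1) j := by
  have hxy : (n : R) = (k + ε) + (j - ε) := by rw [← hn]; push_cast; ring
  rw [wellPoisedTerm_add_two, wellPoisedTerm_add_one hε, wellPoisedTerm_eq_base_mul hε,
    wellPoisedCompanion_succ_left hε, wellPoisedCompanion_succ_right, aperyCoeff]
  push_cast
  generalize (k : R) + ε = x, (j : R) - ε = y, wellPoisedBase ε n k j = B at *
  linear_combination B * ((n : R) + 1) ^ 2 * certPoly_telescope hxy

lemma wellPoisedTerm_boundary (hε : ε ^ 5 = 0) (n : ℕ) :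
    ((n : R) + 2) ^ 3 * (wellPoisedTerm ε (n + 2) (n + 1) 1 + wellPoisedTerm ε (n + 2) (n + 2) 0) -
      aperyCoeff (n + 1) * wellPoisedTerm ε (n + 1) (n + 1) 0 =
      wellPoisedCompanion ε n (n + 1) 0 := by
  have hnil : IsNilpotent ε := ⟨5, hε⟩
  have h₁ : n + 2 + (n + 1) = n + (n + 1) + 1 + 1 := by omega
  have h₂ : n + 2 + (n + 2) = n + (n + 1) + 1 + 1 + 1 := by omega
  have h₃ : n + 1 + (n + 1) = n + (n + 1) + 1 := by omega
  have hx : ((n + 1 : ℕ) : R) + ε = n + 1 + ε := by push_cast; rfl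
  simp only [wellPoisedTerm, wellPoisedCompanion, aperyCoeff, add_zero, h₁, h₂, h₃, hx,
    shiftedFactorial_succ ε (n + (n + 1)), shiftedFactorial_succ ε (n + (n + 1) + _),
    shiftedFactorial_succ (-ε) n, shiftedFactorial_succ (-ε) (n + _),
    Nat.factorial_succ, inverse_shiftedFactorial_eq_mul hnil (n + 1),
    inverse_shiftedFactorial_eq_mul hnil.neg 0]
  push_cast
  linear_combination (-(-1) ^ n * ((n : R) + 1) ^ 2 * (n.factorial : R) ^ 2 *
    shiftedFactorial ε (n + (n + 1)) * shiftedFactorial (-ε) n *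
    (shiftedFactorial ε (n + 2))⁻¹ʳ ^ 5 * (shiftedFactorial (-ε) 1)⁻¹ʳ ^ 5) *
      certPoly_boundary hε ((n : R) + 1)

lemma isAperySequence_wellPoisedSum (hε : ε ^ 5 = 0) : IsAperySequence (wellPoisedSum ε) := by
  intro n
  have hsum : ∑ p ∈ antidiagonal n, (((n : R) + 2) ^ 3 * wellPoisedTerm ε (n + 2) p.1 (p.2 + 2) -
      aperyCoeff (n + 1) * wellPoisedTerm ε (n + 1) p.1 (p.2 + 1) +
      ((n : R) + 1) ^ 3 * wellPoisedTerm ε n p.1 p.2) = -wellPoisedCompanion ε n (n + 1) 0 := by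
    rw [sum_congr rfl fun p hp => wellPoisedTerm_telescope ⟨5, hε⟩ (mem_antidiagonal.mp hp),
      sum_sub_distrib]
    have hleft := Nat.sum_antidiagonal_succ (n := n)
      (f := fun p => wellPoisedCompanion ε n p.1 p.2)
    have hright := Nat.sum_antidiagonal_succ' (n := n)
      (f := fun p => wellPoisedCompanion ε n p.1 p.2)
    rw [wellPoisedCompanion_zero_left hε] at hleft
    linear_combination hleft - hright
  rw [sum_add_distrib, sum_sub_distrib, ← mul_sum, ← mul_sum, ← mul_sum] at hsum
  simp only [wellPoisedSum, Nat.sum_antidiagonal_succ', nsmul_eq_mul]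
  push_cast
  linear_combination hsum + wellPoisedTerm_boundary hε n

end WellPoised

section DualNumbers

open TrivSqZeroExt

lemma H_succ (n : ℕ) : H (n + 1) = H n + 1 / ((n : ℚ) + 1) := sum_range_succ _ n

lemma one_add_inr_mul_one_add_inr {K : Type*} [CommSemiring K] (s t : K) :
    (1 + inr s : DualNumber K) * (1 + inr t) = 1 + inr (s + t) := by
  ext <;> simp [add_comm]

lemma one_add_inr_pow {K : Type*} [CommSemiring K] (t : K) (n : ℕ) :
    (1 + inr t : DualNumber K) ^ n = 1 + inr (n * t) := by
  ext <;> simp [snd_pow]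

lemma shiftedFactorial_inr (c : ℚ) (n : ℕ) :
    shiftedFactorial (inr c : DualNumber ℚ) n = inl (n.factorial : ℚ) * (1 + inr (c * H n)) := by
  induction n with
  | zero => simp [shiftedFactorial, H]
  | succ n ih =>
    have hn : (n : ℚ) + 1 ≠ 0 := by positivity
    have hfactor : (n : DualNumber ℚ) + 1 + inr c =
        inl ((n : ℚ) + 1) * (1 + inr (c / ((n : ℚ) + 1))) := by
      ext <;> simp [mul_div_cancel₀ _ hn]
    rw [shiftedFactorial_succ, ih, hfactor, mul_mul_mul_comm, one_add_inr_mul_one_add_inr,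
      ← inl_mul, Nat.factorial_succ, H_succ]
    push_cast
    ring_nf

lemma inverse_shiftedFactorial_inr (c : ℚ) (n : ℕ) :
    (shiftedFactorial (inr c : DualNumber ℚ) n)⁻¹ʳ =
      inl (n.factorial : ℚ)⁻¹ * (1 + inr (-(c * H n))) := by
  have hn : (n.factorial : ℚ) ≠ 0 := by positivity
  have hmul : shiftedFactorial (inr c : DualNumber ℚ) n *
      (inl (n.factorial : ℚ)⁻¹ * (1 + inr (-(c * H n)))) = 1 := by
    rw [shiftedFactorial_inr, mul_mul_mul_comm, one_add_inr_mul_one_add_inr, ← inl_mul,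
      mul_inv_cancel₀ hn, add_neg_cancel, inr_zero, inl_one, add_zero, mul_one]
  rw [← mul_one (_)⁻¹ʳ, Ring.inverse_mul_eq_iff_eq_mul _ _ _ (.of_mul_eq_one _ hmul), hmul]

lemma wellPoisedTerm_eps (n k j : ℕ) :
    wellPoisedTerm (DualNumber.eps : DualNumber ℚ) n k j =
      inl ((-1) ^ n * (n.factorial : ℚ) ^ 2 * ((n + k).factorial * (n + j).factorial) *
        ((k.factorial : ℚ)⁻¹ ^ 5 * (j.factorial : ℚ)⁻¹ ^ 5)) *
      ((inl ((k : ℚ) - j) + inr 2) *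
        (1 + inr (H (n + k) - H (n + j) - 5 * (H k - H j)))) := by
  have hexp : (1 + inr (1 * H (n + k)) : DualNumber ℚ) * (1 + inr (-1 * H (n + j))) *
      (1 + inr (-(1 * H k))) ^ 5 * (1 + inr (-(-1 * H j))) ^ 5 =
        1 + inr (H (n + k) - H (n + j) - 5 * (H k - H j)) := by
    simp only [one_add_inr_pow, one_add_inr_mul_one_add_inr]
    push_cast
    ring_nf
  have hfactor : (k : DualNumber ℚ) - (j : DualNumber ℚ) + 2 * inr 1 =
      inl ((k : ℚ) - j) + inr 2 := by
    rw [two_mul, ← inr_add]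
    ext <;> norm_num
  rw [wellPoisedTerm, DualNumber.eps, ← inr_neg, hfactor, inverse_shiftedFactorial_inr,
    inverse_shiftedFactorial_inr, shiftedFactorial_inr, shiftedFactorial_inr, ← hexp]
  simp only [← inlHom_apply, map_mul, map_pow, map_neg, map_one, map_natCast]
  ring

lemma snd_wellPoisedTerm_eps (n k j : ℕ) :
    (wellPoisedTerm (DualNumber.eps : DualNumber ℚ) n k j).snd =
      2 * ((-1) ^ n * (n.factorial : ℚ) ^ 2 * ((n + k).factorial * (n + j).factorial) /
        ((k.factorial : ℚ) ^ 5 * (j.factorial : ℚ) ^ 5) *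
      (1 + ((k : ℚ) - j) * ((1 / 2) * (H (n + k) - H (n + j)) - (5 / 2) * (H k - H j)))) := by
  have hsnd (q s t : ℚ) : (inl q * ((inl s + inr 2) * (1 + inr t)) : DualNumber ℚ).snd =
      q * (2 + s * t) := by
    simp [add_comm]
  rw [wellPoisedTerm_eps, hsnd]
  ring

/-- The Apéry numbers `1, 5, 73, 1445, …`, as derivatives of very-well-poised sums. -/
def aperyNumber (n : ℕ) : ℚ := (wellPoisedSum (DualNumber.eps : DualNumber ℚ) n).snd / 2

lemma isAperySequence_aperyNumber : IsAperySequence aperyNumber := by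
  have heps : (DualNumber.eps : DualNumber ℚ) ^ 5 = 0 :=
    pow_eq_zero_of_le (by norm_num : 2 ≤ 5) DualNumber.eps_pow_two
  exact (isAperySequence_wellPoisedSum heps).map
    ((AddMonoidHom.mulRight (2⁻¹ : ℚ)).comp (sndHom ℚ ℚ).toAddMonoidHom)

lemma a_eq_centralBinom_mul (d : ℕ) : a d = d.centralBinom * aperyNumber d := by
  have hbinom : ((2 * d).factorial : ℚ) = d.centralBinom * (d.factorial : ℚ) ^ 2 := by
    rw [two_mul, ← Nat.add_choose_mul_factorial_mul_factorial, ← two_mul, Nat.centralBinom]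
    push_cast
    ring
  rw [a, aperyNumber, wellPoisedSum, snd_sum, sum_div, mul_sum, mul_sum,
    Nat.sum_antidiagonal_eq_sum_range_succ_mk]
  refine sum_congr rfl fun k hk => ?_
  obtain ⟨j, rfl⟩ := Nat.exists_eq_add_of_le (Nat.lt_succ_iff.mp (mem_range.mp hk))
  have hleft : 2 * k + j = k + j + k := by ring
  have hright : k + 2 * j = k + j + j := by ring
  rw [Nat.add_sub_cancel_left, snd_wellPoisedTerm_eps, hleft, hright, ← mul_add, hbinom]
  ring

end DualNumbers

section PicardFuchs

lemma coeff_th (d : ℕ) (f : PowerSeries ℚ) : coeff d (th f) = d * coeff d f := by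
  rw [th, coeff_mk]

lemma coeff_ofNat_mul {R : Type*} [CommSemiring R] (n d : ℕ) [n.AtLeastTwo] (f : PowerSeries R) :
    coeff d ((ofNat(n) : PowerSeries R) * f) = ofNat(n) * coeff d f := by
  rw [← map_ofNat (PowerSeries.C (R := R)) n, coeff_C_mul]

/-- The operator `θ⁴ − 2q(2θ+1)²(17θ²+17θ+5) + 4q²(θ+1)²(2θ+1)(2θ+3)` on `ℚ[[q]]`. -/
def picardFuchs (f : PowerSeries ℚ) : PowerSeries ℚ :=
  th^[4] f -
    2 * X * ((fun g => 2 * th g + g) ((fun g => 2 * th g + g)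
      (17 * th^[2] f + 17 * th f + 5 * f))) +
    4 * X ^ 2 * ((fun g => th g + g) ((fun g => th g + g)
      ((fun g => 2 * th g + g) ((fun g => 2 * th g + 3 * g) f))))

lemma picardFuchs_mk_eq_zero {c : ℕ → ℚ} (hone : c 1 = 10 * c 0)
    (hrec : ∀ n : ℕ, ((n : ℚ) + 2) ^ 4 * c (n + 2) -
      2 * (2 * n + 3) ^ 2 * (17 * ((n : ℚ) + 1) ^ 2 + 17 * (n + 1) + 5) * c (n + 1) +
      4 * ((n : ℚ) + 1) ^ 2 * (2 * n + 1) * (2 * n + 3) * c n = 0) :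
    picardFuchs (mk c) = 0 := by
  ext d
  simp only [picardFuchs, Function.iterate_succ, Function.iterate_zero, Function.comp, id,
    mul_assoc, pow_two, map_add, map_sub, map_zero, coeff_ofNat_mul]
  rcases d with _ | _ | n
  · simp [coeff_th]
  · simp only [coeff_succ_X_mul, coeff_zero_X_mul, map_add, coeff_ofNat_mul, coeff_th, coeff_mk]
    push_cast
    linear_combination hone
  · simp only [coeff_succ_X_mul, map_add, coeff_ofNat_mul, coeff_th, coeff_mk]
    push_cast
    linear_combination hrec n

end PicardFuchs

/-- `I₀ = Σ a_d q^d` (with `a₀ = 1`, `a₁ = 10`, `a₂ = 438`) is annihilated by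
`θ⁴ − 2q(2θ+1)²(17θ²+17θ+5) + 4q²(θ+1)²(2θ+1)(2θ+3)`. -/
theorem stmt_4 :
    a 0 = 1 ∧ a 1 = 10 ∧ a 2 = 438 ∧
    (∀ I₀ : PowerSeries ℚ, I₀ = PowerSeries.mk a →
      th^[4] I₀ -
        2 * X * ((fun g => 2 * th g + g) ((fun g => 2 * th g + g)
          (17 * th^[2] I₀ + 17 * th I₀ + 5 * I₀))) +
        4 * X ^ 2 * ((fun g => th g + g) ((fun g => th g + g)
          ((fun g => 2 * th g + g) ((fun g => 2 * th g + 3 * g) I₀)))) = 0) := by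
  have h₀ : a 0 = 1 := by simp [a, H]
  have h₁ : a 1 = 10 := by norm_num [a, H, sum_range_succ, Nat.factorial]
  have h₂ : a 2 = 438 := by norm_num [a, H, sum_range_succ, Nat.factorial]
  refine ⟨h₀, h₁, h₂, ?_⟩
  rintro _ rfl
  refine picardFuchs_mk_eq_zero (by rw [h₀, h₁, mul_one]) fun n => ?_
  simp only [a_eq_centralBinom_mul]
  exact isAperySequence_aperyNumber.centralBinom_mul_recurrence n

end Stmt4
end
end

section
/- For d ≥ 0 define a_d = (−1)^d Σ_{d₁+d₂=d, d₁,d₂≥0} [(2d₁+d₂)!·(d₁+2d₂)!·((d₁+d₂)!)³ / ((d₁!)⁶(d₂!)⁶)] · [1 + (d₁−d₂)·((1/2)(H_{2d₁+d₂} − H_{d₁+2d₂}) − 3(H_{d₁} − H_{d₂}))]. Then the formal power series I₀(q) = Σ_{d≥0} a_d q^d ∈ ℚ[[q]] (with a₀ = 1, a₁ = 7, a₂ = 199, a₃ = 8359) satisfies the fourth-order differential equation {121θ⁴ − 77q(130θ⁴+266θ³+210θ²+77θ+11) − q²(32126θ⁴+89990θ³+103725θ²+55253θ+11198) − q³(28723θ⁴+74184θ³+63474θ²+20625θ+1716)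 − 7q⁴(1135θ⁴+2336θ³+1881θ²+713θ+110) − 49q⁵(θ+1)⁴} I₀ = 0. -/
noncomputable section
namespace Stmt5

open PowerSeries

/-- The Euler operator `θ = q·d/dq` on `ℚ[[q]]`. -/
def th (f : PowerSeries ℚ) : PowerSeries ℚ :=
  PowerSeries.mk fun d => (d : ℚ) * PowerSeries.coeff d f

/-- `n`-th harmonic number `H_n = Σ_{m=1}^n 1/m` (with `H_0 = 0`). -/
def H (n : ℕ) : ℚ := ∑ m ∈ Finset.range n, 1 / ((m : ℚ) + 1)

/-- Coefficients of the `I`-function of Calabi–Yau No. 7 (`S*(1) ⊕ O(1)^{⊕3}` on `G(2,6)`). -/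
def a (d : ℕ) : ℚ :=
  (-1 : ℚ) ^ d * ∑ d₁ ∈ Finset.range (d + 1),
    (((2 * d₁ + (d - d₁)).factorial : ℚ) * ((d₁ + 2 * (d - d₁)).factorial : ℚ) *
        (((d₁ + (d - d₁)).factorial : ℚ)) ^ 3) /
      (((d₁.factorial : ℚ)) ^ 6 * (((d - d₁).factorial : ℚ)) ^ 6) *
      (1 + ((d₁ : ℚ) - ((d - d₁ : ℕ) : ℚ)) *
        ((1 / 2) * (H (2 * d₁ + (d - d₁)) - H (d₁ + 2 * (d - d₁))) -
          3 * (H d₁ - H (d - d₁))))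

/-!
Deform the two degrees of the abelianised `I`-function to `u = k + ε` and `v = l - ε` over the dual
numbers. The bracket with the harmonic numbers is then a logarithmic derivative: `2 I₀` is the
`ε`-coefficient of the sum of `(u - v) T(k, l) q^(k + l)`, where
`T(k, l) = (-1)^(k + l) (2u + v)! (u + 2v)! ((u + v)!)³ / (u!⁶ v!⁶)` and every factorial is divided
by its value at `k = l = 0`.

Inserting a factor `u + v` into the sum applies `θ`. Divided by `(2u + v)(u + 2v)(u + v)³`, the
products `u⁶ T(k, l)` and `v⁶ T(k, l)` become polynomial multiples of `T(k - 1, l)` and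
`T(k, l - 1)`. Hence a factor `Q` for which `(2u + v)(u + 2v)(u + v)³ Q` lies in the ideal
`(u⁶, v⁶)` can be traded for `q` times another polynomial, as in the Griffiths–Dwork reduction,
provided that `Q` vanishes at `k = l = 0`; there are no boundary terms because `ε⁶ = 0`. Three such
reductions relate the series of `u - v`, `(u - v)³` and `(u - v)⁵`, and eliminating the last two
leaves the Picard–Fuchs equation of the first.
-/

open DualNumber TrivSqZeroExt Finset

theorem coeff_th (f : ℚ⟦X⟧) (n : ℕ) : coeff n (th f) = n * coeff n f :=
  coeff_mk _ _

theorem th_add (f g : ℚ⟦X⟧) : th (f + g) = th f + th g := by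
  ext n
  simp [coeff_th, mul_add]

theorem th_sub (f g : ℚ⟦X⟧) : th (f - g) = th f - th g := by
  ext n
  simp [coeff_th, mul_sub]

theorem th_ofNat_mul (c : ℕ) [c.AtLeastTwo] (f : ℚ⟦X⟧) :
    th (ofNat(c) * f) = ofNat(c) * th f := by
  ext n
  rw [← map_ofNat (C (R := ℚ)) c, coeff_th, coeff_C_mul, coeff_C_mul, coeff_th, mul_left_comm]

theorem th_X_mul (f : ℚ⟦X⟧) : th (X * f) = X * (th f + f) := by
  ext n
  cases n with
  | zero => simp [coeff_th]
  | succ n =>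
    rw [coeff_th, coeff_succ_X_mul, coeff_succ_X_mul, map_add, coeff_th]
    push_cast
    ring

/-- The deformed factorial `(c + 1)(c + 2)⋯(c + n) = Γ(c + n + 1) / Γ(c + 1)`, to be used for
infinitesimal `c`. -/
def shiftedFactorial (c : ℚ[ε]) (n : ℕ) : ℚ[ε] := (ascPochhammer ℚ[ε] n).eval (c + 1)

theorem shiftedFactorial_succ (c : ℚ[ε]) (n : ℕ) :
    shiftedFactorial c (n + 1) = shiftedFactorial c n * (n + 1 + c) := by
  rw [shiftedFactorial, ascPochhammer_succ_eval, ← shiftedFactorial]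
  ring

section

variable {c : ℚ[ε]} (hc : c.fst = 0) (n : ℕ)
include hc

theorem fst_shiftedFactorial : (shiftedFactorial c n).fst = n.factorial := by
  induction n with
  | zero => simp [shiftedFactorial]
  | succ n ih =>
    rw [shiftedFactorial_succ, fst_mul, ih, Nat.factorial_succ]
    simp [hc, mul_comm]

theorem snd_shiftedFactorial : (shiftedFactorial c n).snd = c.snd * (n.factorial * H n) := by
  induction n with
  | zero => simp [shiftedFactorial, H]
  | succ n ih =>
    have H_succ : H (n + 1) = H n + 1 / ((n : ℚ) + 1) := sum_range_succ _ _
    rw [shiftedFactorial_succ, DualNumber.snd_mul, ih, fst_shiftedFactorial hc,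
      Nat.factorial_succ, H_succ]
    simp only [fst_add, fst_natCast, fst_one, hc, snd_add, snd_natCast, snd_one]
    push_cast
    field_simp
    ring

theorem inv_shiftedFactorial_succ_mul :
    (shiftedFactorial c (n + 1))⁻¹ * (n + 1 + c) = (shiftedFactorial c n)⁻¹ := by
  have fst_ne_zero : ((n : ℚ[ε]) + 1 + c).fst ≠ 0 := by
    simp only [fst_add, fst_natCast, fst_one, hc, add_zero]
    positivity
  rw [shiftedFactorial_succ, TrivSqZeroExt.mul_inv_rev, mul_right_comm,
    TrivSqZeroExt.inv_mul_cancel fst_ne_zero, one_mul]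

end

/-- The degree `d₁ = k`, deformed to `k + ε`. -/
def degLeft (k : ℕ) : ℚ[ε] := (k : ℚ[ε]) + ε

/-- The degree `d₂ = l`, deformed to `l - ε`. -/
def degRight (l : ℕ) : ℚ[ε] := (l : ℚ[ε]) - ε

theorem degLeft_succ (k : ℕ) : degLeft (k + 1) = degLeft k + 1 := by
  rw [degLeft, degLeft, Nat.cast_succ, add_right_comm]

theorem degRight_succ (l : ℕ) : degRight (l + 1) = degRight l + 1 := by
  rw [degRight, degRight, Nat.cast_succ, add_sub_right_comm]

theorem eps_pow_six : (ε : ℚ[ε]) ^ 6 = 0 :=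
  pow_eq_zero_of_le (show 2 ≤ 6 by norm_num) (by rw [sq, eps_mul_eps])

theorem degLeft_zero_pow_six : degLeft 0 ^ 6 = 0 := by
  rw [degLeft, Nat.cast_zero, zero_add, eps_pow_six]

theorem degRight_zero_pow_six : degRight 0 ^ 6 = 0 := by
  rw [degRight, Nat.cast_zero, zero_sub, Even.neg_pow (by decide), eps_pow_six]

theorem degLeft_add_degRight (k l : ℕ) : degLeft k + degRight l = (k + l : ℕ) := by
  rw [degLeft, degRight, Nat.cast_add]
  ring

/-- The hypergeometric term of the abelianised `I`-function on `P⁵ × P⁵`, with the degrees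
`(k, l)` deformed to `(degLeft k, degRight l)`. -/
def term (k l : ℕ) : ℚ[ε] :=
  (-1) ^ (k + l) * shiftedFactorial ε (2 * k + l) * shiftedFactorial (-ε) (k + 2 * l) *
    ((k + l).factorial : ℚ[ε]) ^ 3 * (shiftedFactorial ε k)⁻¹ ^ 6 *
    (shiftedFactorial (-ε) l)⁻¹ ^ 6

/-- `term k l` divided by `(2u + v)(u + 2v)(u + v)³`, where `u = degLeft k` and `v = degRight l`.
Because of truncated subtraction, this is meaningful only for `(k, l) ≠ (0, 0)`. -/
def reducedTerm (k l : ℕ) : ℚ[ε] :=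
  (-1) ^ (k + l) * shiftedFactorial ε (2 * k + l - 1) * shiftedFactorial (-ε) (k + 2 * l - 1) *
    ((k + l - 1).factorial : ℚ[ε]) ^ 3 * (shiftedFactorial ε k)⁻¹ ^ 6 *
    (shiftedFactorial (-ε) l)⁻¹ ^ 6

theorem term_eq_mul_reducedTerm {k l : ℕ} (hkl : k + l ≠ 0) :
    term k l = (2 * degLeft k + degRight l) * (degLeft k + 2 * degRight l) *
      (degLeft k + degRight l) ^ 3 * reducedTerm k l := by
  obtain ⟨m, hm⟩ := Nat.exists_eq_succ_of_ne_zero (show 2 * k + l ≠ 0 by lia)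
  obtain ⟨n, hn⟩ := Nat.exists_eq_succ_of_ne_zero (show k + 2 * l ≠ 0 by lia)
  obtain ⟨d, hd⟩ := Nat.exists_eq_succ_of_ne_zero hkl
  have hm' : 2 * (k : ℚ[ε]) + l = m + 1 := by exact_mod_cast congrArg Nat.cast hm
  have hn' : (k : ℚ[ε]) + 2 * l = n + 1 := by exact_mod_cast congrArg Nat.cast hn
  have hleft : 2 * degLeft k + degRight l = (m : ℚ[ε]) + 1 + ε := by
    rw [degLeft, degRight]
    linear_combination hm'
  have hright : degLeft k + 2 * degRight l = (n : ℚ[ε]) + 1 + -ε := by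
    rw [degLeft, degRight]
    linear_combination hn'
  rw [term, reducedTerm, hleft, hright, degLeft_add_degRight, hm, hn, hd, shiftedFactorial_succ,
    shiftedFactorial_succ, Nat.factorial_succ]
  simp only [Nat.succ_sub_one]
  push_cast
  ring

theorem reducedTerm_succ_left (k l : ℕ) :
    (degLeft k + 1) ^ 6 * reducedTerm (k + 1) l =
      -((2 * degLeft k + degRight l + 1) * term k l) := by
  rw [reducedTerm, term, ← inv_shiftedFactorial_succ_mul fst_eps k,
    show 2 * (k + 1) + l - 1 = 2 * k + l + 1 by lia,
    show k + 1 + 2 * l - 1 = k + 2 * l by lia, show k + 1 + l - 1 = k + l by lia,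
    show k + 1 + l = k + l + 1 by lia, shiftedFactorial_succ, degLeft, degRight]
  push_cast
  ring

theorem reducedTerm_succ_right (k l : ℕ) :
    (degRight l + 1) ^ 6 * reducedTerm k (l + 1) =
      -((degLeft k + 2 * degRight l + 1) * term k l) := by
  rw [reducedTerm, term, ← inv_shiftedFactorial_succ_mul (c := -ε) (by simp) l,
    show 2 * k + (l + 1) - 1 = 2 * k + l by lia,
    show k + 2 * (l + 1) - 1 = k + 2 * l + 1 by lia, show k + (l + 1) - 1 = k + l by lia,
    show k + (l + 1) = k + l + 1 by lia, shiftedFactorial_succ, degLeft, degRight]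
  push_cast
  ring

theorem snd_sub_mul_term (k l : ℕ) :
    ((degLeft k - degRight l) * term k l).snd = (-1) ^ (k + l) * 2 *
      (((2 * k + l).factorial * (k + 2 * l).factorial * ((k + l).factorial : ℚ) ^ 3) /
        ((k.factorial : ℚ) ^ 6 * (l.factorial : ℚ) ^ 6) *
      (1 + ((k : ℚ) - l) *
        ((1 / 2) * (H (2 * k + l) - H (k + 2 * l)) - 3 * (H k - H l)))) := by
  have hsign : (-1 : ℚ[ε]) ^ (k + l) = algebraMap ℚ ℚ[ε] ((-1) ^ (k + l)) := by simp
  have fst_neg_eps : (-ε : ℚ[ε]).fst = 0 := by simp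
  rw [term, degLeft, degRight, hsign]
  simp only [DualNumber.snd_mul, fst_mul, snd_pow, fst_pow, fst_inv, snd_inv,
    fst_shiftedFactorial fst_eps, snd_shiftedFactorial fst_eps, fst_shiftedFactorial fst_neg_eps,
    snd_shiftedFactorial fst_neg_eps, fst_add, snd_add, fst_sub, snd_sub, fst_natCast,
    snd_natCast, fst_eps, snd_eps, snd_neg, smul_eq_mul, op_smul_eq_mul, nsmul_eq_mul,
    Nat.pred_eq_sub_one, Nat.reduceSub, algebraMap_eq_inl, fst_inl, snd_inl]
  push_cast
  field_simp
  ring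

/-- The power series `½ Σ_{k,l} [ε] f(degLeft k, degRight l) · term k l · q^{k+l}`, where `[ε]`
takes the coefficient of `ε`. The factor `½` is chosen so that `f = u - v` gives `I₀`. -/
def diagSeries (f : ℚ[ε] → ℚ[ε] → ℚ[ε]) : ℚ⟦X⟧ :=
  PowerSeries.mk fun n =>
    (∑ p ∈ antidiagonal n, f (degLeft p.1) (degRight p.2) * term p.1 p.2).snd / 2

theorem diagSeries_add (f g : ℚ[ε] → ℚ[ε] → ℚ[ε]) :
    diagSeries (fun u v => f u v + g u v) = diagSeries f + diagSeries g := by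
  ext n
  simp [diagSeries, add_mul, sum_add_distrib, add_div]

theorem diagSeries_sub (f g : ℚ[ε] → ℚ[ε] → ℚ[ε]) :
    diagSeries (fun u v => f u v - g u v) = diagSeries f - diagSeries g := by
  ext n
  simp [diagSeries, sub_mul, sum_sub_distrib, sub_div]

theorem diagSeries_ofNat_mul (c : ℕ) [c.AtLeastTwo] (f : ℚ[ε] → ℚ[ε] → ℚ[ε]) :
    diagSeries (fun u v => ofNat(c) * f u v) = ofNat(c) * diagSeries f := by
  ext n
  rw [← map_ofNat (C (R := ℚ)) c, coeff_C_mul, diagSeries, coeff_mk, diagSeries, coeff_mk]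
  simp only [mul_assoc, ← mul_sum]
  rw [← Nat.cast_ofNat (R := ℚ[ε]), ← nsmul_eq_mul, snd_smul, nsmul_eq_mul, Nat.cast_ofNat,
    mul_div_assoc]

theorem diagSeries_add_mul (f : ℚ[ε] → ℚ[ε] → ℚ[ε]) :
    diagSeries (fun u v => (u + v) * f u v) = th (diagSeries f) := by
  ext n
  have degree_mul : ∀ p ∈ antidiagonal n,
      (degLeft p.1 + degRight p.2) * f (degLeft p.1) (degRight p.2) * term p.1 p.2 =
        (n : ℚ) • (f (degLeft p.1) (degRight p.2) * term p.1 p.2) := by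
    intro p hp
    rw [degLeft_add_degRight, mem_antidiagonal.mp hp, mul_assoc, Nat.cast_smul_eq_nsmul,
      nsmul_eq_mul]
  rw [coeff_th, diagSeries, coeff_mk, diagSeries, coeff_mk, sum_congr rfl degree_mul, ← smul_sum,
    snd_smul, smul_eq_mul, mul_div_assoc]

/-- The series attached to the `r`-th power of the difference `u - v` of the deformed degrees.
`I₀` is the first moment. -/
def moment (r : ℕ) : ℚ⟦X⟧ := diagSeries fun u v => (u - v) ^ r

theorem mk_a_eq_moment_one : PowerSeries.mk a = moment 1 := by
  ext n
  simp only [moment, diagSeries, coeff_mk, pow_one, snd_sum, snd_sub_mul_term]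
  rw [Nat.sum_antidiagonal_eq_sum_range_succ_mk, a, mul_sum, sum_div]
  refine sum_congr rfl fun k hk => ?_
  rw [Nat.add_sub_cancel' (mem_range_succ_iff.mp hk)]
  ring

theorem diagSeries_pow_mul_pow (i r : ℕ) :
    diagSeries (fun u v => (u + v) ^ i * (u - v) ^ r) = th^[i] (moment r) := by
  induction i with
  | zero => simp [moment]
  | succ i ih =>
    rw [Function.iterate_succ_apply', ← ih, ← diagSeries_add_mul]
    simp only [pow_succ', mul_assoc]

theorem diagSeries_eq_X_mul {Q R A B : ℚ[ε] → ℚ[ε] → ℚ[ε]}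
    (hQ : ∀ u v, (2 * u + v) * (u + 2 * v) * (u + v) ^ 3 * Q u v = u ^ 6 * A u v - v ^ 6 * B u v)
    (hR : ∀ u v, R u v = (u + 2 * v + 1) * B u (v + 1) - (2 * u + v + 1) * A (u + 1) v)
    (hQ₀ : Q ε (-ε) = 0) :
    diagSeries Q = X * diagSeries R := by
  ext n
  cases n with
  | zero => simp [diagSeries, degLeft, degRight, hQ₀]
  | succ n =>
    have reduce : ∀ p ∈ antidiagonal (n + 1), Q (degLeft p.1) (degRight p.2) * term p.1 p.2 =
        degLeft p.1 ^ 6 * reducedTerm p.1 p.2 * A (degLeft p.1) (degRight p.2) -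
          degRight p.2 ^ 6 * reducedTerm p.1 p.2 * B (degLeft p.1) (degRight p.2) := by
      intro p hp
      rw [term_eq_mul_reducedTerm (by rw [mem_antidiagonal.mp hp]; lia)]
      linear_combination reducedTerm p.1 p.2 * hQ (degLeft p.1) (degRight p.2)
    have shift : ∑ p ∈ antidiagonal (n + 1), Q (degLeft p.1) (degRight p.2) * term p.1 p.2 =
        ∑ p ∈ antidiagonal n, R (degLeft p.1) (degRight p.2) * term p.1 p.2 := by
      rw [sum_congr rfl reduce, sum_sub_distrib, Nat.sum_antidiagonal_succ,
        Nat.sum_antidiagonal_succ']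
      simp only [degLeft_zero_pow_six, degRight_zero_pow_six, degLeft_succ, degRight_succ,
        reducedTerm_succ_left, reducedTerm_succ_right, zero_mul, zero_add, hR]
      rw [← sum_sub_distrib]
      refine sum_congr rfl fun p _ => ?_
      ring
    rw [coeff_succ_X_mul, diagSeries, coeff_mk, diagSeries, coeff_mk, shift]

-- In this and the next two proofs `A` and `B` come from the linear system that says that
-- `(2u + v)(u + 2v)(u + v)³ Q` has no monomial `uⁱvʲ` with `i, j < 6`, for `Q` odd under `u ↔ v`.
theorem moment_three_relation :
    11 * moment 3 + 5 * th^[2] (moment 1) =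
      X * (59 * th^[2] (moment 1) + 76 * th (moment 1) + 24 * moment 1 - 7 * moment 3) := by
  have reduction : diagSeries (fun u v =>
      11 * ((u + v) ^ 0 * (u - v) ^ 3) + 5 * ((u + v) ^ 2 * (u - v) ^ 1)) =
      X * diagSeries fun u v => 59 * ((u + v) ^ 2 * (u - v) ^ 1) +
        76 * ((u + v) ^ 1 * (u - v) ^ 1) + 24 * ((u + v) ^ 0 * (u - v) ^ 1) -
        7 * ((u + v) ^ 0 * (u - v) ^ 3) :=
    diagSeries_eq_X_mul
      (A := fun u v => 4 * (8 * u ^ 2 + 30 * u * v + 29 * v ^ 2))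
      (B := fun u v => 4 * (8 * v ^ 2 + 30 * v * u + 29 * u ^ 2))
      (fun u v => by ring) (fun u v => by ring)
      (by linear_combination 88 * ε * eps_mul_eps (R := ℚ))
  simpa only [diagSeries_add, diagSeries_sub, diagSeries_ofNat_mul, diagSeries_pow_mul_pow,
    Function.iterate_zero_apply, Function.iterate_one] using reduction

theorem moment_five_relation :
    th^[4] (moment 1) - moment 5 =
      X * (73 * th^[4] (moment 1) + 184 * th^[3] (moment 1) + 186 * th^[2] (moment 1) +
        88 * th (moment 1) + 16 * moment 1 - 2 * moment 3 - moment 5) := by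
  have reduction : diagSeries (fun u v =>
      (u + v) ^ 4 * (u - v) ^ 1 - (u + v) ^ 0 * (u - v) ^ 5) =
      X * diagSeries fun u v => 73 * ((u + v) ^ 4 * (u - v) ^ 1) +
        184 * ((u + v) ^ 3 * (u - v) ^ 1) + 186 * ((u + v) ^ 2 * (u - v) ^ 1) +
        88 * ((u + v) ^ 1 * (u - v) ^ 1) + 16 * ((u + v) ^ 0 * (u - v) ^ 1) -
        2 * ((u + v) ^ 0 * (u - v) ^ 3) - (u + v) ^ 0 * (u - v) ^ 5 :=
    diagSeries_eq_X_mul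
      (A := fun u v => 8 * v * (2 * u ^ 3 + 9 * u ^ 2 * v + 14 * u * v ^ 2 + 9 * v ^ 3))
      (B := fun u v => 8 * u * (2 * v ^ 3 + 9 * v ^ 2 * u + 14 * v * u ^ 2 + 9 * u ^ 3))
      (fun u v => by ring) (fun u v => by ring)
      (by linear_combination -32 * ε ^ 3 * eps_mul_eps (R := ℚ))
  simpa only [diagSeries_add, diagSeries_sub, diagSeries_ofNat_mul, diagSeries_pow_mul_pow,
    Function.iterate_zero_apply, Function.iterate_one] using reduction

theorem th_sq_moment_three_relation :
    th^[4] (moment 1) - th^[2] (moment 3) =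
      X * (124 * th^[4] (moment 1) + 238 * th^[3] (moment 1) + 175 * th^[2] (moment 1) +
        60 * th (moment 1) + 8 * moment 1 + 11 * th^[2] (moment 3) + 22 * th (moment 3) +
        5 * moment 3 - 3 * moment 5) := by
  have reduction : diagSeries (fun u v =>
      (u + v) ^ 4 * (u - v) ^ 1 - (u + v) ^ 2 * (u - v) ^ 3) =
      X * diagSeries fun u v => 124 * ((u + v) ^ 4 * (u - v) ^ 1) +
        238 * ((u + v) ^ 3 * (u - v) ^ 1) + 175 * ((u + v) ^ 2 * (u - v) ^ 1) +
        60 * ((u + v) ^ 1 * (u - v) ^ 1) + 8 * ((u + v) ^ 0 * (u - v) ^ 1) +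
        11 * ((u + v) ^ 2 * (u - v) ^ 3) + 22 * ((u + v) ^ 1 * (u - v) ^ 3) +
        5 * ((u + v) ^ 0 * (u - v) ^ 3) - 3 * ((u + v) ^ 0 * (u - v) ^ 5) :=
    diagSeries_eq_X_mul
      (A := fun u v => 4 * v * (2 * u ^ 3 + 13 * u ^ 2 * v + 32 * u * v ^ 2 + 33 * v ^ 3))
      (B := fun u v => 4 * u * (2 * v ^ 3 + 13 * v ^ 2 * u + 32 * v * u ^ 2 + 33 * u ^ 3))
      (fun u v => by ring) (fun u v => by ring) (by ring)
  simpa only [diagSeries_add, diagSeries_sub, diagSeries_ofNat_mul, diagSeries_pow_mul_pow,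
    Function.iterate_zero_apply, Function.iterate_one] using reduction

/-- `I₀ = Σ a_d q^d` (with `a₀ = 1`, `a₁ = 7`, `a₂ = 199`, `a₃ = 8359`)
is annihilated by `121θ⁴ − 77q(130θ⁴+266θ³+210θ²+77θ+11)
− q²(32126θ⁴+89990θ³+103725θ²+55253θ+11198) − q³(28723θ⁴+74184θ³+63474θ²+20625θ+1716)
− 7q⁴(1135θ⁴+2336θ³+1881θ²+713θ+110) − 49q⁵(θ+1)⁴`. -/
theorem stmt_5 :
    a 0 = 1 ∧ a 1 = 7 ∧ a 2 = 199 ∧ a 3 = 8359 ∧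
    (∀ I₀ : PowerSeries ℚ, I₀ = PowerSeries.mk a →
      121 * th^[4] I₀ -
        77 * X * (130 * th^[4] I₀ + 266 * th^[3] I₀ + 210 * th^[2] I₀ + 77 * th I₀ + 11 * I₀) -
        X ^ 2 * (32126 * th^[4] I₀ + 89990 * th^[3] I₀ + 103725 * th^[2] I₀ +
          55253 * th I₀ + 11198 * I₀) -
        X ^ 3 * (28723 * th^[4] I₀ + 74184 * th^[3] I₀ + 63474 * th^[2] I₀ +
          20625 * th I₀ + 1716 * I₀) -
        7 * X ^ 4 * (1135 * th^[4] I₀ + 2336 * th^[3] I₀ + 1881 * th^[2] I₀ +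
          713 * th I₀ + 110 * I₀) -
        49 * X ^ 5 * ((fun g => th g + g) ((fun g => th g + g) ((fun g => th g + g)
          ((fun g => th g + g) I₀)))) = 0) := by
  have initial : a 0 = 1 ∧ a 1 = 7 ∧ a 2 = 199 ∧ a 3 = 8359 := by
    norm_num [a, H, sum_range_succ, Nat.factorial]
  obtain ⟨h₀, h₁, h₂, h₃⟩ := initial
  refine ⟨h₀, h₁, h₂, h₃, fun I₀ hI₀ => ?_⟩
  rw [hI₀, mk_a_eq_moment_one]
  have R₁ := moment_three_relation
  have θR₁ := congrArg th R₁
  have θθR₁ := congrArg th θR₁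
  have R₂ := moment_five_relation
  have R₃ := th_sq_moment_three_relation
  simp only [Function.iterate_succ_apply', Function.iterate_zero_apply, th_add, th_sub,
    th_ofNat_mul, th_X_mul] at R₁ θR₁ θθR₁ R₂ R₃ ⊢
  have : CharZero ℚ⟦X⟧ := algebraRat.charZero _
  refine (mul_eq_zero.mp (?_ : (16 : ℚ⟦X⟧) * _ = 0)).resolve_left (OfNat.ofNat_ne_zero 16)
  -- `R₂` eliminates `moment 5` from `R₃`. In `R₁`, `moment 3` has the coefficient `11 + 7 * X`, so
  -- multiples of `R₁` and its derivatives then eliminate `moment 3`.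
  linear_combination (1 - X) * (11 + 7 * X) ^ 3 * R₃ + 3 * X * (11 + 7 * X) ^ 3 * R₂ +
    (1 + 11 * X) * (1 - X) * (11 + 7 * X) ^ 2 * θθR₁ + 228 * X * (1 - X) * (11 + 7 * X) * θR₁ +
    24 * X * (22 - 124 * X + 21 * X ^ 2) * R₁

end Stmt5
end
end

section
/- For d ≥ 0 define a_d = (−1)^d Σ_{d₁+d₂=d, d₁,d₂≥0} [(2d₁)!·(2d₂)!·((d₁+d₂)!)⁵ / ((d₁!)⁷(d₂!)⁷)] · [1 + (d₁−d₂)·(H_{2d₁} − H_{2d₂} − (7/2)(H_{d₁} − H_{d₂}))]. Then the formal power series I₀(q) = Σ_{d≥0} a_d q^d ∈ ℚ[[q]] (with a₀ = 1, a₁ = 4, a₂ = 64) satisfies the fourth-order differential equation {49θ⁴ − 14q(134θ⁴+286θ³+234θ²+91θ+14) − 4q²(3183θ⁴+10266θ³+13501θ²+8225θ+1918) − 8q³(2588θ⁴+8400θ³+10256θ²+5649θ+1190) − 48q⁴(256θ⁴+848θ³+1141θ²+717θ+174) − 2304q⁵(θ+1)⁴} I₀ = 0. -/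
noncomputable section
namespace Stmt6

open PowerSeries

/-- The Euler operator `θ = q·d/dq` on `ℚ[[q]]`. -/
def th (f : PowerSeries ℚ) : PowerSeries ℚ :=
  PowerSeries.mk fun d => (d : ℚ) * PowerSeries.coeff d f

/-- `n`-th harmonic number `H_n = Σ_{m=1}^n 1/m` (with `H_0 = 0`). -/
def H (n : ℕ) : ℚ := ∑ m ∈ Finset.range n, 1 / ((m : ℚ) + 1)

/-- Coefficients of the `I`-function of Calabi–Yau No. 13 (`Sym²S* ⊕ O(1)^{⊕4}` on `G(2,7)`). -/
def a (d : ℕ) : ℚ :=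
  (-1 : ℚ) ^ d * ∑ d₁ ∈ Finset.range (d + 1),
    (((2 * d₁).factorial : ℚ) * ((2 * (d - d₁)).factorial : ℚ) *
        (((d₁ + (d - d₁)).factorial : ℚ)) ^ 5) /
      (((d₁.factorial : ℚ)) ^ 7 * (((d - d₁).factorial : ℚ)) ^ 7) *
      (1 + ((d₁ : ℚ) - ((d - d₁ : ℕ) : ℚ)) *
        (H (2 * d₁) - H (2 * (d - d₁)) - (7 / 2) * (H d₁ - H (d - d₁))))

/-!
Up to the factor `(-1)^d (d!)^5`, the number `a_d` is the `ε`-part of the coefficient of `q^d` in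
the Wronskian `θf · g - f · θg` of two Frobenius solutions `f = Σ w_k q^(k + e)` and
`g = Σ v_k q^(k - e)`, `e = ε/2`, of the hypergeometric equation `θ⁶f = 2q(2θ + 1)f` over the dual
numbers: the derivatives of the weights `(2k)!/(k!)⁷` produce the harmonic numbers. The equation
makes the `ℤ[q]`-span of the 36 products `θⁱf · θʲg`, `i, j < 6`, stable under `θ`, so that checking
that an operator annihilates the Wronskian is a finite computation in this span. The operator to
check comes from dividing the recurrence for `a_d` by `((d - 5)!)^5`, which multiplies `P_j(θ)` by
`(θ(θ - 1)⋯(θ - 4 + j))^5` and a sign; this loses the coefficients of degree less than 5, for which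
the values `a_0, …, a_4` are computed.
-/

open scoped Polynomial

section DifferentialOperator

variable {R K : Type*} [CommRing R] [CommRing K] [Algebra R K]

/-- The differential operator `Σ_{j ≤ N} q ^ j P_j(δ)`. -/
def diffOp (δ : Derivation R K K) (q : K) (N : ℕ) (P : ℕ → ℤ[X]) (y : K) : K :=
  ∑ j ∈ Finset.range (N + 1), q ^ j * Polynomial.aeval (δ : Module.End R K) (P j) y

variable (R) in
/-- The Euler operator `q·d/dq` as a derivation of `R⟦q⟧`. -/
def theta : Derivation R R⟦X⟧ R⟦X⟧ :=
  (X : R⟦X⟧) • d⁄dX R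

theorem theta_X : theta R X = X := by
  simp [theta]

theorem coeff_theta (f : R⟦X⟧) (n : ℕ) : coeff n (theta R f) = n * coeff n f := by
  cases n with
  | zero => simp [theta]
  | succ n =>
    rw [theta, Derivation.smul_apply, smul_eq_mul, coeff_succ_X_mul, coeff_derivative, mul_comm]
    push_cast
    rfl

theorem coeff_aeval_theta (P : ℤ[X]) (f : R⟦X⟧) (n : ℕ) :
    coeff n (Polynomial.aeval (theta R : Module.End R R⟦X⟧) P f) =
      (P.eval (n : ℤ) : ℤ) * coeff n f := by
  induction P using Polynomial.induction_on generalizing f with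
  | C m => simp [← zsmul_eq_mul]
  | add P Q hP hQ => simp [hP, hQ, add_mul]
  | monomial i m h =>
    rw [pow_succ, ← mul_assoc, map_mul, Polynomial.aeval_X, Module.End.mul_apply, h]
    simp only [Polynomial.eval_mul, Polynomial.eval_X, Int.cast_mul, Int.cast_natCast,
      Derivation.coeFn_coe, coeff_theta]
    ring

theorem coeff_diffOp_theta (N : ℕ) (P : ℕ → ℤ[X]) (f : R⟦X⟧) (n : ℕ) :
    coeff n (diffOp (theta R) X N P f) =
      ∑ j ∈ Finset.range (N + 1),
        if j ≤ n then ((P j).eval ((n - j : ℕ) : ℤ) : ℤ) * coeff (n - j) f else 0 := by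
  simp only [diffOp, map_sum, coeff_X_pow_mul', coeff_aeval_theta]

theorem coeff_diffOp_theta_mk_map_coeff {S : Type*} [CommRing S] (π : R →+ S) (N : ℕ)
    (P : ℕ → ℤ[X]) (f : R⟦X⟧) (n : ℕ) :
    coeff n (diffOp (theta S) X N P (mk fun d => π (coeff d f))) =
      π (coeff n (diffOp (theta R) X N P f)) := by
  simp only [coeff_diffOp_theta, coeff_mk, map_sum, apply_ite π, map_zero, ← zsmul_eq_mul,
    map_zsmul]

/-- The coefficients of the operator annihilating `Σ b_d q ^ d` whenever `Σ_j q ^ j P_j(θ)`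
annihilates `Σ (-1) ^ d (d!) ^ s b_d q ^ d`, which is a Hadamard product. -/
def hadamardTwist (s N : ℕ) (P : ℕ → ℤ[X]) (j : ℕ) : ℤ[X] :=
  Polynomial.C ((-1) ^ j) * P j * descPochhammer ℤ (N - j) ^ s

theorem coeff_diffOp_hadamardTwist (s N : ℕ) (P : ℕ → ℤ[X]) (b : ℕ → R) (n : ℕ) :
    coeff (n + N) (diffOp (theta R) X N P (mk fun d => (-1) ^ d * (d.factorial : R) ^ s * b d)) =
      (-1) ^ (n + N) * (n.factorial : R) ^ s *
        coeff (n + N) (diffOp (theta R) X N (hadamardTwist s N P) (mk b)) := by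
  simp only [coeff_diffOp_theta, coeff_mk, Finset.mul_sum]
  refine Finset.sum_congr rfl fun j hj => ?_
  obtain ⟨i, rfl⟩ := Nat.exists_eq_add_of_le (Finset.mem_range_succ_iff.mp hj)
  have hfactorial : (n + i).factorial = n.factorial * (n + i).descFactorial i := by
    rw [← Nat.factorial_mul_descFactorial (Nat.le_add_left i n), Nat.add_sub_cancel]
  have hsign : (-1 : R) ^ (n + (j + i)) * (-1) ^ j = (-1) ^ (n + i) := by
    rw [← pow_add, show n + (j + i) + j = n + i + 2 * j by ring, pow_add, pow_mul]
    simp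
  have hindex : n + (j + i) - j = n + i := by omega
  rw [if_pos (by omega), if_pos (by omega), hindex, hfactorial, hadamardTwist,
    Nat.add_sub_cancel_left, Polynomial.eval_mul, Polynomial.eval_mul, Polynomial.eval_C,
    Polynomial.eval_pow, descPochhammer_eval_eq_descFactorial, ← hsign]
  push_cast
  ring

end DifferentialOperator

section CoefficientLists

variable {A M : Type*} [AddCommMonoid M]

/-- The sum `Σ φ i lᵢ` over the entries of a list, which reads `l` as the coefficients of a linear
combination. -/
def indexedSum (φ : ℕ → A → M) (l : List A) : M :=
  (l.mapIdx φ).sum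

theorem indexedSum_nil (φ : ℕ → A → M) : indexedSum φ [] = 0 := rfl

theorem indexedSum_cons (φ : ℕ → A → M) (c : A) (l : List A) :
    indexedSum φ (c :: l) = φ 0 c + indexedSum (fun i => φ (i + 1)) l := by
  simp [indexedSum]

theorem indexedSum_add_fun (φ ψ : ℕ → A → M) (l : List A) :
    indexedSum (fun i c => φ i c + ψ i c) l = indexedSum φ l + indexedSum ψ l := by
  induction l generalizing φ ψ with
  | nil => simp [indexedSum_nil]
  | cons c l ih => simp only [indexedSum_cons, ih]; abel

theorem indexedSum_map {B : Type*} (φ : ℕ → B → M) (f : A → B) (l : List A) :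
    indexedSum φ (l.map f) = indexedSum (fun i c => φ i (f c)) l := by
  induction l generalizing φ with
  | nil => rfl
  | cons c l ih => rw [List.map_cons, indexedSum_cons, indexedSum_cons, ih]

theorem indexedSum_mapIdx {B : Type*} (φ : ℕ → B → M) (f : ℕ → A → B) (l : List A) :
    indexedSum φ (l.mapIdx f) = indexedSum (fun i c => φ i (f i c)) l := by
  simp only [indexedSum, List.mapIdx_mapIdx, Function.comp_def]

theorem map_indexedSum {N F : Type*} [AddCommMonoid N] [FunLike F M N] [AddMonoidHomClass F M N]
    (g : F) (φ : ℕ → A → M) (l : List A) :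
    g (indexedSum φ l) = indexedSum (fun i c => g (φ i c)) l := by
  induction l generalizing φ with
  | nil => simp [indexedSum_nil]
  | cons c l ih => rw [indexedSum_cons, indexedSum_cons, map_add, ih]

theorem mul_indexedSum {K : Type*} [NonUnitalNonAssocSemiring K] (c : K) (φ : ℕ → A → K)
    (l : List A) : c * indexedSum φ l = indexedSum (fun i x => c * φ i x) l :=
  map_indexedSum (AddMonoidHom.mulLeft c) φ l

theorem indexedSum_eq_zero {φ : ℕ → A → M} {l : List A} (h : ∀ c ∈ l, ∀ i, φ i c = 0) :
    indexedSum φ l = 0 := by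
  induction l generalizing φ with
  | nil => rfl
  | cons c l ih =>
    rw [List.forall_mem_cons] at h
    rw [indexedSum_cons, h.1, ih fun d hd i => h.2 d hd (i + 1), add_zero]

/-- Entrywise sum of two lists, the shorter one being padded by zeros. -/
def addLists (add : A → A → A) : List A → List A → List A
  | [], l => l
  | l, [] => l
  | c :: l, d :: l' => add c d :: addLists add l l'

theorem indexedSum_addLists {add : A → A → A} {φ : ℕ → A → M}
    (hφ : ∀ i c d, φ i (add c d) = φ i c + φ i d) (l l' : List A) :
    indexedSum φ (addLists add l l') = indexedSum φ l + indexedSum φ l' := by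
  induction l generalizing φ l' with
  | nil => simp [addLists, indexedSum_nil]
  | cons c l ih =>
    cases l' with
    | nil => simp [addLists, indexedSum_nil]
    | cons d l' =>
      simp only [addLists, indexedSum_cons, hφ, ih fun i => hφ (i + 1)]
      abel

/-- The coefficients of `Σ cᵢ uᵢ₊₁` in terms of those of `Σ cᵢ uᵢ`, `i < 6`, when
`u₆ = q (4 u₁ + 2 u₀)`: the action of the companion matrix of `θ⁶ - 2q(2θ + 1)`. Here `qMul m` is
multiplication by `m q`. -/
def raise (zero : A) (add : A → A → A) (qMul : ℤ → A → A) : List A → List A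
  | [c₀, c₁, c₂, c₃, c₄, c₅] => [qMul 2 c₅, add c₀ (qMul 4 c₅), c₁, c₂, c₃, c₄]
  | l => zero :: l

theorem indexedSum_raise {zero : A} {add : A → A → A} {qMul : ℤ → A → A} {φ : ℕ → A → M}
    (hzero : φ 0 zero = 0) (hadd : ∀ c d, φ 1 (add c d) = φ 1 c + φ 1 d)
    (hsix : ∀ c, φ 6 c = φ 0 (qMul 2 c) + φ 1 (qMul 4 c)) (l : List A) :
    indexedSum φ (raise zero add qMul l) = indexedSum (fun i => φ (i + 1)) l := by
  unfold raise
  split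
  · simp only [indexedSum_cons, indexedSum_nil, zero_add, Nat.reduceAdd, hadd, hsix]
    abel
  · rw [indexedSum_cons, hzero, zero_add]

end CoefficientLists

section Grid

variable {R K : Type*} [CommRing R] [CommRing K] [Algebra R K]

/-- The value of an element of `ℤ[q]` given by its list of coefficients. -/
def qEval (q : K) (p : List ℤ) : K :=
  indexedSum (fun j (c : ℤ) => (c : K) * q ^ j) p

/-- The operation of `m q` on coefficient lists of elements of `ℤ[q]`. -/
def qMul (m : ℤ) (p : List ℤ) : List ℤ :=
  0 :: p.map (m * ·)

/-- The sum of two elements of `ℤ[q]` given by coefficient lists. -/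
def qAdd : List ℤ → List ℤ → List ℤ :=
  addLists (· + ·)

theorem qEval_qAdd (q : K) (p p' : List ℤ) : qEval q (qAdd p p') = qEval q p + qEval q p' :=
  indexedSum_addLists (fun _ _ _ => by push_cast; ring) p p'

theorem qEval_map_mul (q : K) (m : ℤ) (p : List ℤ) :
    qEval q (p.map (m * ·)) = m * qEval q p := by
  simp only [qEval, indexedSum_map, mul_indexedSum, Int.cast_mul, mul_assoc]

theorem qEval_qMul (q : K) (m : ℤ) (p : List ℤ) : qEval q (qMul m p) = m * q * qEval q p := by
  rw [mul_right_comm, ← qEval_map_mul, qMul, qEval, qEval, mul_comm, mul_indexedSum,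
    indexedSum_cons]
  simp only [Int.cast_zero, zero_mul, zero_add, pow_succ, mul_comm q, mul_assoc]

theorem derivation_qEval {δ : Derivation R K K} {q : K} (hq : δ q = q) (p : List ℤ) :
    δ (qEval q p) = qEval q (p.mapIdx fun n c => (n : ℤ) * c) := by
  have hterm (n : ℕ) (c : ℤ) : δ ((c : K) * q ^ n) = ((n * c : ℤ) : K) * q ^ n := by
    cases n with
    | zero => simp
    | succ n =>
      simp only [Derivation.leibniz, Derivation.leibniz_pow, Derivation.map_intCast, hq,
        smul_eq_mul, nsmul_eq_mul, Nat.add_sub_cancel]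
      push_cast
      ring
  simp only [qEval, map_indexedSum, indexedSum_mapIdx, hterm]

/-- A formal linear combination of symbols `uᵢⱼ`, `i, j < 6`, with coefficients in `ℤ[q]`: the
entry `j` of row `i` is the coefficient list of the coefficient of `uᵢⱼ`. -/
abbrev Grid := List (List (List ℤ))

/-- The relations satisfied by `u i j = θⁱf · θʲg`, where `f` and `g` are solutions of
`θ⁶f = 2q(2θ + 1)f` and the derivation `δ` stands for `θ`. -/
structure IsSolutionProduct (δ : Derivation R K K) (q : K) (u : ℕ → ℕ → K) : Prop where
  map_q : δ q = q
  map_apply : ∀ i j, δ (u i j) = u (i + 1) j + u i (j + 1)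
  six_left : ∀ j, u 6 j = q * (4 * u 1 j + 2 * u 0 j)
  six_right : ∀ i, u i 6 = q * (4 * u i 1 + 2 * u i 0)

/-- The polynomial with the given list of coefficients, constant term first. -/
def ofCoeffs : List ℤ → ℤ[X]
  | [] => 0
  | c :: l => Polynomial.C c + Polynomial.X * ofCoeffs l

namespace Grid

/-- The value of a formal linear combination at a family `u`. -/
def eval (q : K) (u : ℕ → ℕ → K) (V : Grid) : K :=
  indexedSum (fun i => indexedSum fun j p => qEval q p * u i j) V

/-- The sum of two formal linear combinations. -/
def add : Grid → Grid → Grid := addLists (addLists qAdd)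

/-- Multiplication of a formal linear combination by `m q`. -/
def qSmul (m : ℤ) (V : Grid) : Grid := V.map (List.map (qMul m))

/-- Multiplication of a formal linear combination by an integer. -/
def smul (m : ℤ) (V : Grid) : Grid := V.map (List.map (List.map (m * ·)))

/-- The action of the derivation with `q ↦ q` and `uᵢⱼ ↦ uᵢ₊₁,ⱼ + uᵢ,ⱼ₊₁`, where `u₆ⱼ` and `uᵢ₆` are
reduced by means of `u₆ = q (4 u₁ + 2 u₀)`. -/
def theta (V : Grid) : Grid :=
  add (V.map (List.map (List.mapIdx fun n (c : ℤ) => (n : ℤ) * c)))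
    (add (raise [] (addLists qAdd) (fun m => List.map (qMul m)) V) (V.map (raise [] qAdd qMul)))

/-- The action of the differential operator `Σ lᵢ θ ^ i`. -/
def applyOp : List ℤ → Grid → Grid
  | [], _ => []
  | c :: l, V => add (smul c V) (theta (applyOp l V))

/-- The action of the differential operator `(θ (θ - 1) ⋯ (θ - n + 1)) ^ s`. -/
def applyFalling (s : ℕ) : ℕ → Grid → Grid
  | 0, V => V
  | n + 1, V => (applyOp [-n, 1])^[s] (applyFalling s n V)

/-- The sum `Σ_{j < n} F j`. -/
def sumRange (F : ℕ → Grid) : ℕ → Grid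
  | 0 => []
  | n + 1 => add (sumRange F n) (F n)

variable (q : K) (u : ℕ → ℕ → K)

theorem eval_add (V W : Grid) : (V.add W).eval q u = V.eval q u + W.eval q u :=
  indexedSum_addLists (fun _ => indexedSum_addLists fun _ _ _ => by rw [qEval_qAdd, add_mul]) V W

theorem eval_qSmul (m : ℤ) (V : Grid) : (V.qSmul m).eval q u = m * q * V.eval q u := by
  simp only [eval, qSmul, indexedSum_map, qEval_qMul, mul_indexedSum, mul_assoc]

theorem eval_smul (m : ℤ) (V : Grid) : (V.smul m).eval q u = m * V.eval q u := by
  simp only [eval, smul, indexedSum_map, qEval_map_mul, mul_indexedSum, mul_assoc]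

theorem eval_sumRange (F : ℕ → Grid) (n : ℕ) :
    (sumRange F n).eval q u = ∑ j ∈ Finset.range n, (F j).eval q u := by
  induction n with
  | zero => rfl
  | succ n ih => rw [sumRange, eval_add, ih, Finset.sum_range_succ]

theorem eval_eq_zero {V : Grid} (h : ∀ r ∈ V, ∀ p ∈ r, ∀ c ∈ p, c = 0) : V.eval q u = 0 :=
  indexedSum_eq_zero fun r hr _ => indexedSum_eq_zero fun p hp _ => by
    rw [qEval, indexedSum_eq_zero fun c hc _ => by rw [h r hr p hp c hc, Int.cast_zero, zero_mul],
      zero_mul]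

variable {q u}

theorem eval_raise_rows (hleft : ∀ j, u 6 j = q * (4 * u 1 j + 2 * u 0 j)) (V : Grid) :
    eval q u (raise [] (addLists qAdd) (fun m => List.map (qMul m)) V) =
      eval q (fun i j => u (i + 1) j) V := by
  refine indexedSum_raise rfl ?_ ?_ V
  · exact fun r s => indexedSum_addLists (fun _ _ _ => by rw [qEval_qAdd, add_mul]) r s
  · intro r
    simp only [indexedSum_map, ← indexedSum_add_fun, qEval_qMul, hleft]
    congr! 3
    push_cast
    ring

theorem eval_raise_columns (hright : ∀ i, u i 6 = q * (4 * u i 1 + 2 * u i 0)) (V : Grid) :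
    eval q u (V.map (raise [] qAdd qMul)) = eval q (fun i j => u i (j + 1)) V := by
  rw [eval, eval, indexedSum_map]
  congr! 3 with i r
  refine indexedSum_raise (by simp [qEval, indexedSum_nil]) (fun _ _ => by rw [qEval_qAdd, add_mul])
    (fun p => ?_) r
  simp only [qEval_qMul, hright]
  push_cast
  ring

variable {δ : Derivation R K K} (hu : IsSolutionProduct δ q u)

include hu

theorem derivation_eval (V : Grid) : δ (V.eval q u) = V.theta.eval q u := by
  rw [theta, eval_add, eval_add, eval_raise_rows hu.six_left,
    eval_raise_columns hu.six_right]
  simp only [eval, map_indexedSum, indexedSum_map, ← indexedSum_add_fun]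
  congr! 6 with i r j p
  rw [Derivation.leibniz, derivation_qEval hu.map_q, hu.map_apply, smul_eq_mul, smul_eq_mul]
  ring

theorem eval_applyOp (l : List ℤ) (V : Grid) :
    (applyOp l V).eval q u =
      Polynomial.aeval (δ : Module.End R K) (ofCoeffs l) (V.eval q u) := by
  induction l with
  | nil => simp [ofCoeffs, applyOp, eval, indexedSum_nil]
  | cons c l ih =>
    rw [applyOp, eval_add, eval_smul, ← derivation_eval hu, ih, ofCoeffs]
    simp [← zsmul_eq_mul]

theorem eval_applyFalling (s n : ℕ) (V : Grid) :
    (applyFalling s n V).eval q u =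
      Polynomial.aeval (δ : Module.End R K) (descPochhammer ℤ n ^ s) (V.eval q u) := by
  induction n with
  | zero => simp [applyFalling]
  | succ n ih =>
    have hfactor : ofCoeffs [-n, 1] = Polynomial.X - (n : ℤ[X]) := by
      simp only [ofCoeffs, eq_intCast]
      push_cast
      ring
    have hsemiconj := Function.Semiconj.iterate_right
      (eval_applyOp hu [-n, 1]) s (applyFalling s n V)
    rw [applyFalling, hsemiconj, ih, ← Module.End.pow_apply, ← Module.End.mul_apply, ← map_pow,
      ← map_mul, hfactor, descPochhammer_succ_right, mul_pow, mul_comm]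

end Grid

/-- The polynomials `P_j` for which `Σ_j q ^ j P_j(θ)` is the Picard–Fuchs operator, as coefficient
lists. -/
def picardFuchsCoeffs : ℕ → List ℤ
  | 0 => [0, 0, 0, 0, 49]
  | 1 => [14, 91, 234, 286, 134].map (-14 * ·)
  | 2 => [1918, 8225, 13501, 10266, 3183].map (-4 * ·)
  | 3 => [1190, 5649, 10256, 8400, 2588].map (-8 * ·)
  | 4 => [174, 717, 1141, 848, 256].map (-48 * ·)
  | 5 => [1, 4, 6, 4, 1].map (-2304 * ·)
  | _ => []

/-- The coefficients `P_j` of the Picard–Fuchs operator `Σ_j q ^ j P_j(θ)`. -/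
def picardFuchs (j : ℕ) : ℤ[X] := ofCoeffs (picardFuchsCoeffs j)

/-- The formal linear combination `u₁₀ - u₀₁`. -/
def wronskianGrid : Grid := [[[], [-1]], [[1]]]

/-- The image of `u₁₀ - u₀₁` under `q ^ j Q_j(θ)`, `Q_j` being `hadamardTwist 5 5 picardFuchs j`. -/
def twistedGrid (j : ℕ) : Grid :=
  (Grid.qSmul (-1))^[j]
    (Grid.applyOp (picardFuchsCoeffs j) (Grid.applyFalling 5 (5 - j) wronskianGrid))

theorem sumRange_twistedGrid_eq_zero :
    ∀ r ∈ Grid.sumRange twistedGrid 6, ∀ p ∈ r, ∀ c ∈ p, c = 0 := by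
  decide +kernel

theorem eval_wronskianGrid (q : K) (u : ℕ → ℕ → K) : wronskianGrid.eval q u = u 1 0 - u 0 1 := by
  simp only [wronskianGrid, Grid.eval, qEval, indexedSum_cons, indexedSum_nil]
  push_cast
  ring

theorem diffOp_hadamardTwist_picardFuchs_sub {q : K} {u : ℕ → ℕ → K} {δ : Derivation R K K}
    (hu : IsSolutionProduct δ q u) :
    diffOp δ q 5 (hadamardTwist 5 5 picardFuchs) (u 1 0 - u 0 1) = 0 := by
  have heval (j : ℕ) : (twistedGrid j).eval q u =
      q ^ j * Polynomial.aeval (δ : Module.End R K) (hadamardTwist 5 5 picardFuchs j)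
        (u 1 0 - u 0 1) := by
    have hsemiconj : Function.Semiconj (Grid.eval q u) (Grid.qSmul (-1)) (-q * ·) := fun V => by
      simp [Grid.eval_qSmul]
    rw [twistedGrid, hsemiconj.iterate_right, mul_left_iterate,
      Grid.eval_applyOp hu, Grid.eval_applyFalling hu,
      eval_wronskianGrid, hadamardTwist, ← picardFuchs, mul_assoc, map_mul, map_mul,
      Polynomial.aeval_C, Module.End.mul_apply, Module.End.mul_apply, Module.algebraMap_end_apply,
      zsmul_eq_mul, neg_pow]
    push_cast
    ring
  simp only [diffOp, ← heval]
  rw [← Grid.eval_sumRange, Grid.eval_eq_zero q u sumRange_twistedGrid_eq_zero]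

end Grid

section Frobenius

variable {R : Type*} [CommRing R]

/-- The series `Σ (k + e) ^ i w_k q ^ k`: up to the factor `q ^ e`, it is the `i`-th `θ`-derivative
of `Σ w_k q ^ (k + e)`. -/
def frobenius (e : R) (w : ℕ → R) (i : ℕ) : R⟦X⟧ :=
  mk fun k => (k + e) ^ i * w k

theorem theta_frobenius (e : R) (w : ℕ → R) (i : ℕ) :
    theta R (frobenius e w i) = frobenius e w (i + 1) - C e * frobenius e w i := by
  ext k
  simp only [coeff_theta, frobenius, map_sub, coeff_mk, coeff_C_mul]
  ring

/-- The recurrence which says that `Σ w_k q ^ (k + e)` is annihilated by `θ⁶ - 2q(2θ + 1)`. -/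
structure IsFrobeniusSolution (e : R) (w : ℕ → R) : Prop where
  indicial : e ^ 6 * w 0 = 0
  recurrence : ∀ k : ℕ, (k + 1 + e) ^ 6 * w (k + 1) = (4 * (k + e) + 2) * w k

theorem IsFrobeniusSolution.frobenius_six {e : R} {w : ℕ → R} (h : IsFrobeniusSolution e w) :
    frobenius e w 6 = X * (4 * frobenius e w 1 + 2 * frobenius e w 0) := by
  ext k
  cases k with
  | zero => simpa [frobenius] using h.indicial
  | succ k =>
    simp only [coeff_succ_X_mul, frobenius, map_add, ← map_ofNat (C (R := R)), coeff_C_mul,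
      coeff_mk]
    push_cast
    rw [h.recurrence]
    ring

/-- The Wronskian `θf · g - f · θg` of `f = Σ w_k q ^ (k + e)` and `g = Σ v_k q ^ (k - e)`, in which
the factors `q ^ e` and `q ^ (-e)` cancel. -/
def wronskian (e : R) (w v : ℕ → R) : R⟦X⟧ :=
  frobenius e w 1 * frobenius (-e) v 0 - frobenius e w 0 * frobenius (-e) v 1

theorem diffOp_hadamardTwist_picardFuchs_wronskian {e : R} {w v : ℕ → R}
    (hw : IsFrobeniusSolution e w) (hv : IsFrobeniusSolution (-e) v) :
    diffOp (theta R) X 5 (hadamardTwist 5 5 picardFuchs) (wronskian e w v) = 0 := by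
  refine diffOp_hadamardTwist_picardFuchs_sub
    (u := fun i j => frobenius e w i * frobenius (-e) v j) ⟨theta_X, fun i j => ?_, ?_, ?_⟩
  · rw [Derivation.leibniz, theta_frobenius, theta_frobenius, map_neg, smul_eq_mul, smul_eq_mul]
    ring
  · intro j
    rw [hw.frobenius_six]
    ring
  · intro i
    rw [hv.frobenius_six]
    ring

theorem coeff_wronskian (e : R) (w v : ℕ → R) (d : ℕ) :
    coeff d (wronskian e w v) =
      ∑ k ∈ Finset.range (d + 1), (k - (d - k : ℕ) + 2 * e) * (w k * v (d - k)) := by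
  simp only [wronskian, map_sub, coeff_mul, frobenius, coeff_mk, ← Finset.sum_sub_distrib,
    Finset.Nat.sum_antidiagonal_eq_sum_range_succ_mk]
  refine Finset.sum_congr rfl fun k _ => ?_
  ring

end Frobenius

section DeformedWeight

open TrivSqZeroExt
open scoped DualNumber

/-- The coefficients of the power series solution of `θ⁶f = 2q(2θ + 1)f`. -/
def weight (k : ℕ) : ℚ := (2 * k).factorial / (k.factorial : ℚ) ^ 7

theorem weight_succ (k : ℕ) : weight (k + 1) = (4 * k + 2) / (k + 1 : ℚ) ^ 6 * weight k := by
  rw [weight, weight, show 2 * (k + 1) = 2 * k + 1 + 1 by ring]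
  simp only [Nat.factorial_succ]
  push_cast
  field_simp
  ring

theorem H_succ (n : ℕ) : H (n + 1) = H n + 1 / (n + 1) :=
  Finset.sum_range_succ _ _

/-- The deformation `weight k (1 + s ε (2 H_{2k} - 7 H_k))` of `weight k`: to first order in
`e = s ε` it is `weight (k + e) / weight e`. -/
def dualWeight (s : ℚ) (k : ℕ) : ℚ[ε] :=
  inl (weight k) + inr (s * weight k * (2 * H (2 * k) - 7 * H k))

theorem fst_dualWeight (s : ℚ) (k : ℕ) : fst (dualWeight s k) = weight k := by
  simp [dualWeight]

theorem snd_dualWeight (s : ℚ) (k : ℕ) :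
    snd (dualWeight s k) = s * weight k * (2 * H (2 * k) - 7 * H k) := by
  simp [dualWeight]

theorem isFrobeniusSolution_dualWeight (s : ℚ) :
    IsFrobeniusSolution (inr s : ℚ[ε]) (dualWeight s) where
  indicial := by ext <;> simp [snd_pow]
  recurrence k := by
    have hH : H (2 * (k + 1)) = H (2 * k) + 1 / (2 * k + 1) + 1 / (2 * k + 2) := by
      rw [show 2 * (k + 1) = 2 * k + 1 + 1 by ring, H_succ, H_succ]
      push_cast
      ring
    have htwo : (2 : ℚ[ε]) = inl 2 := rfl
    have hfour : (4 : ℚ[ε]) = inl 4 := rfl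
    ext
    · simp only [fst_mul, fst_pow, fst_add, fst_natCast, fst_one, fst_inl, fst_inr, fst_dualWeight,
        weight_succ, htwo, hfour, add_zero]
      field_simp
    · simp only [DualNumber.snd_mul, snd_pow, fst_mul, fst_pow, fst_add, snd_add, fst_natCast,
        snd_natCast, fst_one, snd_one, fst_inl, snd_inl, fst_inr, snd_inr, fst_dualWeight,
        snd_dualWeight, weight_succ, hH, H_succ, htwo, hfour, smul_eq_mul, nsmul_eq_mul,
        Nat.pred_succ]
      field_simp
      ring

/-- The Wronskian of the Frobenius solutions with `e = ±ε/2`. -/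
def dualWronskian : ℚ[ε]⟦X⟧ :=
  wronskian (inr (1 / 2)) (dualWeight (1 / 2)) (dualWeight (-(1 / 2)))

theorem diffOp_hadamardTwist_picardFuchs_dualWronskian :
    diffOp (theta ℚ[ε]) X 5 (hadamardTwist 5 5 picardFuchs) dualWronskian = 0 :=
  diffOp_hadamardTwist_picardFuchs_wronskian (isFrobeniusSolution_dualWeight _)
    (by simpa only [inr_neg] using isFrobeniusSolution_dualWeight (-(1 / 2)))

theorem a_eq_snd_coeff_dualWronskian (d : ℕ) :
    a d = (-1) ^ d * (d.factorial : ℚ) ^ 5 * sndHom ℚ ℚ (coeff d dualWronskian) := by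
  have htwo : (2 : ℚ[ε]) = inl 2 := rfl
  rw [a, dualWronskian, coeff_wronskian, mul_assoc, map_sum]
  congr 1
  rw [Finset.mul_sum]
  refine Finset.sum_congr rfl fun k hk => ?_
  rw [show k + (d - k) = d by grind]
  simp only [sndHom_apply, DualNumber.snd_mul, fst_mul, fst_add, snd_add, fst_sub, snd_sub,
    fst_natCast, snd_natCast, fst_inl, snd_inl, fst_inr, snd_inr, fst_dualWeight, snd_dualWeight,
    weight, htwo]
  field_simp
  ring

theorem coeff_add_five_diffOp_picardFuchs_mk_a (n : ℕ) :
    coeff (n + 5) (diffOp (theta ℚ) X 5 picardFuchs (mk a)) = 0 := by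
  have hsnd := coeff_diffOp_theta_mk_map_coeff (sndHom ℚ ℚ).toAddMonoidHom 5
    (hadamardTwist 5 5 picardFuchs) dualWronskian (n + 5)
  rw [diffOp_hadamardTwist_picardFuchs_dualWronskian, map_zero, map_zero] at hsnd
  rw [funext a_eq_snd_coeff_dualWronskian, coeff_diffOp_hadamardTwist]
  exact mul_eq_zero_of_right _ hsnd

end DeformedWeight

section PicardFuchs

theorem a_zero : a 0 = 1 := by
  norm_num [a, H]

theorem a_one : a 1 = 4 := by
  norm_num [a, H, Finset.sum_range_succ, Nat.factorial]

theorem a_two : a 2 = 64 := by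
  norm_num [a, H, Finset.sum_range_succ, Nat.factorial]

theorem a_three : a 3 = 1408 := by
  norm_num [a, H, Finset.sum_range_succ, Nat.factorial]

theorem a_four : a 4 = 37216 := by
  norm_num [a, H, Finset.sum_range_succ, Nat.factorial]

theorem th_eq_theta : th = theta ℚ := by
  ext f d
  rw [coeff_theta, th, coeff_mk]

theorem diffOp_picardFuchs (f : ℚ⟦X⟧) :
    diffOp (theta ℚ) X 5 picardFuchs f =
      49 * th^[4] f -
        14 * X * (134 * th^[4] f + 286 * th^[3] f + 234 * th^[2] f + 91 * th f + 14 * f) -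
        4 * X ^ 2 * (3183 * th^[4] f + 10266 * th^[3] f + 13501 * th^[2] f +
          8225 * th f + 1918 * f) -
        8 * X ^ 3 * (2588 * th^[4] f + 8400 * th^[3] f + 10256 * th^[2] f +
          5649 * th f + 1190 * f) -
        48 * X ^ 4 * (256 * th^[4] f + 848 * th^[3] f + 1141 * th^[2] f +
          717 * th f + 174 * f) -
        2304 * X ^ 5 * ((fun g => th g + g)^[4] f) := by
  have hcoeff (c : ℤ) (g : ℚ⟦X⟧) : (algebraMap ℤ (Module.End ℚ ℚ⟦X⟧) c) g = c * g := by
    rw [Module.algebraMap_end_apply, zsmul_eq_mul]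
  simp only [th_eq_theta, diffOp, Finset.sum_range_succ, Finset.sum_range_zero, picardFuchs,
    picardFuchsCoeffs, List.map_cons, List.map_nil, ofCoeffs, map_add, map_mul, map_zero,
    Polynomial.aeval_C, Polynomial.aeval_X, LinearMap.add_apply, Module.End.mul_apply,
    LinearMap.zero_apply, hcoeff, Derivation.coeFn_coe, Function.iterate_succ,
    Function.iterate_zero, Function.comp_apply, id_eq, Derivation.leibniz, Derivation.map_intCast,
    smul_eq_mul]
  push_cast
  ring

theorem coeff_diffOp_picardFuchs_mk_a_of_lt_five {d : ℕ} (hd : d < 5) :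
    coeff d (diffOp (theta ℚ) X 5 picardFuchs (mk a)) = 0 := by
  rw [coeff_diffOp_theta]
  interval_cases d <;>
    norm_num [Finset.sum_range_succ, picardFuchs, picardFuchsCoeffs, ofCoeffs, a_zero, a_one, a_two,
      a_three, a_four]

theorem diffOp_picardFuchs_mk_a : diffOp (theta ℚ) X 5 picardFuchs (mk a) = 0 := by
  ext d
  rcases lt_or_ge d 5 with hd | hd
  · exact coeff_diffOp_picardFuchs_mk_a_of_lt_five hd
  · obtain ⟨n, rfl⟩ := Nat.exists_eq_add_of_le' hd
    exact coeff_add_five_diffOp_picardFuchs_mk_a n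

end PicardFuchs

/-- `I₀ = Σ a_d q^d` (with `a₀ = 1`, `a₁ = 4`, `a₂ = 64`) is annihilated by
`49θ⁴ − 14q(134θ⁴+286θ³+234θ²+91θ+14) − 4q²(3183θ⁴+10266θ³+13501θ²+8225θ+1918)
− 8q³(2588θ⁴+8400θ³+10256θ²+5649θ+1190) − 48q⁴(256θ⁴+848θ³+1141θ²+717θ+174)
− 2304q⁵(θ+1)⁴`. -/
theorem stmt_6 :
    a 0 = 1 ∧ a 1 = 4 ∧ a 2 = 64 ∧
    (∀ I₀ : PowerSeries ℚ, I₀ = PowerSeries.mk a →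
      49 * th^[4] I₀ -
        14 * X * (134 * th^[4] I₀ + 286 * th^[3] I₀ + 234 * th^[2] I₀ + 91 * th I₀ + 14 * I₀) -
        4 * X ^ 2 * (3183 * th^[4] I₀ + 10266 * th^[3] I₀ + 13501 * th^[2] I₀ +
          8225 * th I₀ + 1918 * I₀) -
        8 * X ^ 3 * (2588 * th^[4] I₀ + 8400 * th^[3] I₀ + 10256 * th^[2] I₀ +
          5649 * th I₀ + 1190 * I₀) -
        48 * X ^ 4 * (256 * th^[4] I₀ + 848 * th^[3] I₀ + 1141 * th^[2] I₀ +
          717 * th I₀ + 174 * I₀) -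
        2304 * X ^ 5 * ((fun g => th g + g) ((fun g => th g + g) ((fun g => th g + g)
          ((fun g => th g + g) I₀)))) = 0) := by
  refine ⟨a_zero, a_one, a_two, ?_⟩
  rintro _ rfl
  rw [← diffOp_picardFuchs_mk_a, diffOp_picardFuchs]
  rfl

end Stmt6
end
end
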